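/- Let n ≥ 1 and let Ω ⊂ ℝⁿ be a bounded domain. Assume the standing hypotheses on f and V, with f moreover of class C² and convex on [0,∞), and with exponent p satisfying 1 < p < p_S. Let T > 0 and let u be a nonnegative classical solution of u_t = Δu + V(x)f(u) on (0,T)×Ω such that ∂_t u ≥ 0 everywhere. Let x₀ ∈ Ω satisfy V(x₀) = 0 and assume that the connected component of the zero set 𝒱₀ = {x ∈ closure(Ω) : V(x) = 0} containing x₀ does not intersect ∂Ω. Then x₀ is not a blowup point of u; that is, there exist r > 0 and M > 0 such that u(t,x) ≤ M for all t ∈ (T/2,T) and all x ∈ Ω with |x−x₀| < r. -/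

import Mathlib

open Set Metric Filter

noncomputable def lap {n : ℕ} (g : EuclideanSpace ℝ (Fin n) → ℝ)
    (x : EuclideanSpace ℝ (Fin n)) : ℝ :=
  ∑ i : Fin n, fderiv ℝ (fun y => fderiv ℝ g y (EuclideanSpace.single i 1)) x
    (EuclideanSpace.single i 1)

/-- One-dimensional second order differentiability at `0`. -/
def D2 (φ : ℝ → ℝ) (a b : ℝ) : Prop :=
  ∃ φ' : ℝ → ℝ, (∀ᶠ s in nhds (0:ℝ), HasDerivAt φ (φ' s) s) ∧ φ' 0 = a ∧ HasDerivAt φ' b 0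

lemma D2.const (c : ℝ) : D2 (fun _ => c) 0 0 :=
  ⟨fun _ => 0, Eventually.of_forall fun s => hasDerivAt_const s c, rfl, hasDerivAt_const _ _⟩

lemma D2.add {φ ψ : ℝ → ℝ} {a b a' b' : ℝ} (h : D2 φ a b) (h' : D2 ψ a' b') :
    D2 (fun s => φ s + ψ s) (a + a') (b + b') := by
  obtain ⟨f, hf, rfl, hf2⟩ := h
  obtain ⟨g, hg, rfl, hg2⟩ := h'
  refine ⟨fun s => f s + g s, ?_, rfl, hf2.add hg2⟩
  filter_upwards [hf, hg] with s h1 h2 using h1.add h2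

lemma D2.const_mul {φ : ℝ → ℝ} {a b : ℝ} (c : ℝ) (h : D2 φ a b) :
    D2 (fun s => c * φ s) (c * a) (c * b) := by
  obtain ⟨f, hf, rfl, hf2⟩ := h
  refine ⟨fun s => c * f s, ?_, rfl, hf2.const_mul c⟩
  filter_upwards [hf] with s h1 using h1.const_mul c

lemma D2.sub {φ ψ : ℝ → ℝ} {a b a' b' : ℝ} (h : D2 φ a b) (h' : D2 ψ a' b') :
    D2 (fun s => φ s - ψ s) (a - a') (b - b') := by
  obtain ⟨f, hf, rfl, hf2⟩ := h
  obtain ⟨g, hg, rfl, hg2⟩ := h'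
  refine ⟨fun s => f s - g s, ?_, rfl, hf2.sub hg2⟩
  filter_upwards [hf, hg] with s h1 h2 using h1.sub h2

lemma D2.mul {φ ψ : ℝ → ℝ} {a b a' b' : ℝ} (h : D2 φ a b) (h' : D2 ψ a' b') :
    D2 (fun s => φ s * ψ s) (a * ψ 0 + φ 0 * a') (b * ψ 0 + 2 * (a * a') + φ 0 * b') := by
  obtain ⟨f, hf, rfl, hf2⟩ := h
  obtain ⟨g, hg, rfl, hg2⟩ := h'
  refine ⟨fun s => f s * ψ s + φ s * g s, ?_, rfl, ?_⟩
  · filter_upwards [hf, hg] with s h1 h2 using h1.mul h2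
  · have := (hf2.mul hg.self_of_nhds).add (hf.self_of_nhds.mul hg2)
    exact this.congr_deriv (by ring)

lemma D2.comp {φ : ℝ → ℝ} {a b y F2 : ℝ} {F F1 : ℝ → ℝ} (h : D2 φ a b) (hy : φ 0 = y)
    (hF : ∀ᶠ s in nhds y, HasDerivAt F (F1 s) s) (hF1 : HasDerivAt F1 F2 y) :
    D2 (fun s => F (φ s)) (F1 y * a) (F2 * a ^ 2 + F1 y * b) := by
  subst hy
  obtain ⟨f, hf, rfl, hf2⟩ := h
  have hc : ContinuousAt φ 0 := hf.self_of_nhds.continuousAt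
  refine ⟨fun s => F1 (φ s) * f s, ?_, rfl, ?_⟩
  · filter_upwards [hf, hc.eventually hF] with s h1 h2 using h2.comp s h1
  · have := (hF1.comp (0:ℝ) hf.self_of_nhds).mul hf2
    exact this.congr_deriv (by simp only [Function.comp]; ring)

lemma D2.congr {φ ψ : ℝ → ℝ} {a b : ℝ} (h : D2 φ a b) (he : ∀ s, ψ s = φ s) : D2 ψ a b := by
  have : ψ = φ := funext he
  rwa [this]

lemma D2.nonneg_of_min {φ : ℝ → ℝ} {a b : ℝ} (h : D2 φ a b) (hm : IsLocalMin φ 0) : 0 ≤ b := by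
  obtain ⟨f, hf, rfl, hf2⟩ := h
  by_contra hb
  push Not at hb
  have h0 : f 0 = 0 := hm.hasDerivAt_eq_zero hf.self_of_nhds
  have h1 : ∀ᶠ s in nhdsWithin (0:ℝ) (Ioi 0), f s < 0 := by
    have := hasDerivAt_iff_tendsto_slope.1 hf2
    have h2 : ∀ᶠ s in nhdsWithin (0:ℝ) {0}ᶜ, slope f 0 s < 0 := this.eventually_lt_const hb
    have h3 : nhdsWithin (0:ℝ) (Ioi 0) ≤ nhdsWithin (0:ℝ) {0}ᶜ :=
      nhdsWithin_mono _ (fun x hx => ne_of_gt hx)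
    filter_upwards [h2.filter_mono h3, self_mem_nhdsWithin] with s hs hs0
    rw [slope_def_field, h0] at hs
    have hs0 : (0:ℝ) < s := hs0
    simp only [sub_zero] at hs
    by_contra hcon
    push Not at hcon
    exact absurd hs (not_lt.2 (div_nonneg hcon hs0.le))
  obtain ⟨ε, hε, hball⟩ := Metric.eventually_nhds_iff.1 (hf.and hm)
  have h2 : ∀ᶠ s in nhdsWithin (0:ℝ) (Ioi 0), s ∈ Ioo (0:ℝ) ε := Ioo_mem_nhdsGT hε
  obtain ⟨δ, hδ, hδ2⟩ := mem_nhdsGT_iff_exists_Ioo_subset.1 (h1.and h2)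
  have hδ : (0:ℝ) < δ := hδ
  have hx : δ/2 ∈ Ioo (0:ℝ) δ := ⟨by linarith, by linarith⟩
  have hxe := (hδ2 hx).2
  have hin : ∀ s ∈ Icc (0:ℝ) (δ/2), dist s 0 < ε := by
    intro s hs
    rw [Real.dist_eq, sub_zero, abs_of_nonneg hs.1]
    exact lt_of_le_of_lt hs.2 hxe.2
  obtain ⟨c, hc, hcs⟩ := exists_hasDerivAt_eq_slope φ f hx.1
    (fun s hs => (hball (hin s hs)).1.continuousAt.continuousWithinAt)
    (fun s hs => (hball (hin s ⟨hs.1.le, hs.2.le⟩)).1)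
  have hneg : f c < 0 := (hδ2 ⟨hc.1, by linarith [hc.2, hx.2]⟩).1
  have hge : φ 0 ≤ φ (δ/2) := (hball (hin _ ⟨hx.1.le, le_refl _⟩)).2
  rw [hcs] at hneg
  exact absurd hneg (not_lt.2 (div_nonneg (by linarith) (by linarith)))

section
variable {n : ℕ}

lemma D2.of_contDiffAt {g : EuclideanSpace ℝ (Fin n) → ℝ} {x : EuclideanSpace ℝ (Fin n)}
    (hg : ContDiffAt ℝ 2 g x) (e : EuclideanSpace ℝ (Fin n)) :
    D2 (fun s => g (x + s • e)) (fderiv ℝ g x e) (fderiv ℝ (fun y => fderiv ℝ g y e) x e) := by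
  have hline : ∀ s : ℝ, HasDerivAt (fun s : ℝ => x + s • e) e s := by
    intro s
    simpa using ((hasDerivAt_id s).smul_const e).const_add x
  have hc : ContinuousAt (fun s : ℝ => x + s • e) 0 := (hline 0).continuousAt
  have h0 : x + (0:ℝ) • e = x := by simp
  refine ⟨fun s => fderiv ℝ g (x + s • e) e, ?_, by simp, ?_⟩
  · have h1 : ∀ᶠ y in nhds x, DifferentiableAt ℝ g y := by
      filter_upwards [hg.eventually (by simp)] with y hy using hy.differentiableAt (by simp)
    rw [← h0] at h1
    filter_upwards [hc.eventually h1] with s hs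
    exact hs.hasFDerivAt.comp_hasDerivAt s (hline s)
  · have h1 : ContDiffAt ℝ 1 (fderiv ℝ g) x := hg.fderiv_right (by norm_num)
    have h2 : ContDiffAt ℝ 1 (fun y => fderiv ℝ g y e) x := h1.clm_apply contDiffAt_const
    have h3 : DifferentiableAt ℝ (fun y => fderiv ℝ g y e) (x + (0:ℝ) • e) := by
      rw [h0]; exact h2.differentiableAt (by simp)
    have := h3.hasFDerivAt.comp_hasDerivAt (0:ℝ) (hline 0)
    rw [h0] at this
    exact this

lemma continuousAt_dd {g : EuclideanSpace ℝ (Fin n) → ℝ} {x : EuclideanSpace ℝ (Fin n)}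
    (hg : ContDiffAt ℝ 2 g x) (e : EuclideanSpace ℝ (Fin n)) :
    ContinuousAt (fun x => fderiv ℝ g x e) x ∧
    ContinuousAt (fun x => fderiv ℝ (fun y => fderiv ℝ g y e) x e) x := by
  have h1 : ContDiffAt ℝ 1 (fderiv ℝ g) x := hg.fderiv_right (by norm_num)
  have h2 : ContDiffAt ℝ 1 (fun y => fderiv ℝ g y e) x := h1.clm_apply contDiffAt_const
  have h3 : ContDiffAt ℝ 0 (fderiv ℝ (fun y => fderiv ℝ g y e)) x := h2.fderiv_right (by norm_num)
  exact ⟨h2.continuousAt, (h3.clm_apply contDiffAt_const).continuousAt⟩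

/-- Pointwise derivatives of a space-time function. -/
def PD (z : ℝ → EuclideanSpace ℝ (Fin n) → ℝ) (t : ℝ) (x : EuclideanSpace ℝ (Fin n))
    (d : ℝ) (a b : Fin n → ℝ) : Prop :=
  HasDerivAt (fun s => z s x) d t ∧
    ∀ i, D2 (fun s => z t (x + s • EuclideanSpace.single i (1:ℝ))) (a i) (b i)

lemma PD.touch {z : ℝ → EuclideanSpace ℝ (Fin n) → ℝ} {t t0 : ℝ} {x : EuclideanSpace ℝ (Fin n)}
    {d : ℝ} {a b : Fin n → ℝ} {K : Set (EuclideanSpace ℝ (Fin n))}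
    (h : PD z t x d a b) (ht : t0 < t) (hK : K ∈ nhds x) (h0 : z t x = 0)
    (hx : ∀ y ∈ K, 0 ≤ z t y) (hs : ∀ s ∈ Ico t0 t, 0 ≤ z s x) : d ≤ 0 ∧ 0 ≤ ∑ i, b i := by
  constructor
  · by_contra hd
    push Not at hd
    have h1 := hasDerivAt_iff_tendsto_slope.1 h.1
    have h2 : ∀ᶠ s in nhdsWithin t {t}ᶜ, 0 < slope (fun s => z s x) t s :=
      h1.eventually_const_lt hd
    have h3 : nhdsWithin t (Iio t) ≤ nhdsWithin t {t}ᶜ :=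
      nhdsWithin_mono _ (fun x hx => ne_of_lt hx)
    have h4 : ∀ᶠ s in nhdsWithin t (Iio t), s ∈ Ico t0 t := Ico_mem_nhdsLT ht
    obtain ⟨s, hs1, hs2⟩ := ((h2.filter_mono h3).and h4).exists
    rw [slope_def_field, h0, sub_zero] at hs1
    have h5 := hs s hs2
    exact absurd hs1 (not_lt.2 (div_nonpos_of_nonneg_of_nonpos h5 (by linarith [hs2.2])))
  · apply Finset.sum_nonneg
    intro i _
    apply (h.2 i).nonneg_of_min
    have hc : ContinuousAt (fun s : ℝ => x + s • EuclideanSpace.single i (1:ℝ)) 0 := by fun_prop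
    have hK' : K ∈ nhds (x + (0:ℝ) • EuclideanSpace.single i (1:ℝ)) := by simpa using hK
    filter_upwards [hc.eventually hK'] with s hs
    simpa [h0] using hx _ hs

lemma first_touch {z : ℝ → EuclideanSpace ℝ (Fin n) → ℝ} {t0 t1 : ℝ}
    {K : Set (EuclideanSpace ℝ (Fin n))} (hK : IsCompact K)
    (hz : ContinuousOn (Function.uncurry z) (Icc t0 t1 ×ˢ K))
    (hstart : ∀ x ∈ K, 0 < z t0 x)
    (h : ∀ t ∈ Ioc t0 t1, ∀ x ∈ K, z t x = 0 → (∀ y ∈ K, 0 ≤ z t y) →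
      (∀ s ∈ Ico t0 t, 0 ≤ z s x) → False) :
    ∀ t ∈ Icc t0 t1, ∀ x ∈ K, 0 < z t x := by
  by_contra hcon
  push Not at hcon
  obtain ⟨tt, htt, xx, hxx, hneg⟩ := hcon
  have hcomp : IsCompact (Icc t0 t1 ×ˢ K) := isCompact_Icc.prod hK
  have hclosed : IsClosed ((Icc t0 t1 ×ˢ K) ∩ (Function.uncurry z) ⁻¹' (Iic 0)) :=
    hz.preimage_isClosed_of_isClosed hcomp.isClosed isClosed_Iic
  have hbad : IsCompact ((Icc t0 t1 ×ˢ K) ∩ (Function.uncurry z) ⁻¹' (Iic 0)) :=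
    hcomp.of_isClosed_subset hclosed inter_subset_left
  obtain ⟨⟨t, x⟩, ⟨⟨ht, hx⟩, hle⟩, hmin⟩ := hbad.exists_isMinOn
    ⟨(tt, xx), ⟨⟨htt, hxx⟩, hneg⟩⟩ continuous_fst.continuousOn
  simp only [mem_preimage, Function.uncurry_apply_pair, mem_Iic] at hle ht hx
  have hlt : t0 < t := by
    rcases eq_or_lt_of_le ht.1 with h1 | h1
    · have := hstart x hx
      rw [← h1] at hle
      linarith
    · exact h1
  have hpos : ∀ s ∈ Ico t0 t, ∀ y ∈ K, 0 < z s y := by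
    intro s hs y hy
    by_contra hc
    push Not at hc
    have := hmin (show ((s, y) : ℝ × _) ∈ _ from ⟨⟨⟨hs.1, hs.2.le.trans ht.2⟩, hy⟩, hc⟩)
    simp only [mem_ofPred_eq] at this
    linarith [hs.2]
  have hge : ∀ y ∈ K, 0 ≤ z t y := by
    intro y hy
    have hc : ContinuousWithinAt (fun s => z s y) (Ico t0 t) t := by
      have h1 : ContinuousWithinAt (Function.uncurry z) (Icc t0 t1 ×ˢ K) (t, y) := hz _ ⟨ht, hy⟩
      have h2 : ContinuousWithinAt (fun s : ℝ => (s, y)) (Ico t0 t) t := by fun_prop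
      exact ContinuousWithinAt.comp (f := fun s : ℝ => (s, y)) (t := Icc t0 t1 ×ˢ K) h1 h2
        (fun s hs => ⟨⟨hs.1, hs.2.le.trans ht.2⟩, hy⟩)
    have hne : (nhdsWithin t (Ico t0 t)).NeBot := by
      rw [nhdsWithin_Ico_eq_nhdsLT hlt]; infer_instance
    exact ge_of_tendsto hc (by
      filter_upwards [self_mem_nhdsWithin] with s hs using (hpos s hs y hy).le)
  exact h t ⟨hlt, ht.2⟩ x hx (le_antisymm hle (hge x hx)) hge (fun s hs => (hpos s hs x hx).le)

end


section
variable {n : ℕ}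

/-- Nonnegative supersolutions of `D_t = ΔD - C D`. -/
structure SuperSol (Ω : Set (EuclideanSpace ℝ (Fin n))) (T' C : ℝ)
    (D : ℝ → EuclideanSpace ℝ (Fin n) → ℝ) : Prop where
  cont : ContinuousOn (Function.uncurry D) (Ioo 0 T' ×ˢ Ω)
  nonneg : ∀ t ∈ Ioo 0 T', ∀ x ∈ Ω, 0 ≤ D t x
  pde : ∀ t ∈ Ioo 0 T', ∀ x ∈ Ω, ∃ d a b, PD D t x d a b ∧ ∑ i, b i - C * D t x ≤ d

lemma SuperSol.barrier {Ω : Set (EuclideanSpace ℝ (Fin n))} {T' C : ℝ}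
    {D w : ℝ → EuclideanSpace ℝ (Fin n) → ℝ} (hD : SuperSol Ω T' C D) (hC : 0 < C)
    {K : Set (EuclideanSpace ℝ (Fin n))} (hK : IsCompact K) (hKΩ : K ⊆ Ω) {t0 t1 : ℝ}
    (h0 : 0 < t0) (h1 : t1 < T')
    (hwc : ContinuousOn (Function.uncurry w) (Icc t0 t1 ×ˢ K))
    (hw0 : ∀ x ∈ K, w t0 x ≤ D t0 x)
    (hw : ∀ t ∈ Ioc t0 t1, ∀ x ∈ K, w t x ≤ D t x ∨ (K ∈ nhds x ∧ (0 < w t x →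
      ∃ d a b, PD w t x d a b ∧ d ≤ ∑ i, b i - C * w t x))) :
    ∀ t ∈ Icc t0 t1, ∀ x ∈ K, w t x ≤ D t x := by
  have hsub : Icc t0 t1 ×ˢ K ⊆ Ioo 0 T' ×ˢ Ω := by
    rintro ⟨t, x⟩ ⟨ht, hx⟩
    exact ⟨⟨h0.trans_le ht.1, lt_of_le_of_lt ht.2 h1⟩, hKΩ hx⟩
  intro t ht x hx
  refine le_of_forall_pos_le_add ?_
  intro ι hι
  have key := first_touch (z := fun t x => D t x + ι - w t x) hK (t0 := t0) (t1 := t1)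
    (((hD.cont.mono hsub).add continuousOn_const).sub hwc)
    (fun x hx => by have := hw0 x hx; linarith) ?_ t ht x hx
  · linarith
  · intro t ht x hx hz hzx hzt
    have htT : t ∈ Ioo 0 T' := ⟨h0.trans ht.1, lt_of_le_of_lt ht.2 h1⟩
    have hDn := hD.nonneg t htT x (hKΩ hx)
    rcases hw t ht x hx with h2 | ⟨hKx, h3⟩
    · linarith
    · obtain ⟨d, a, b, hpd, hle⟩ := h3 (by linarith)
      obtain ⟨d', a', b', hpd', hle'⟩ := hD.pde t htT x (hKΩ hx)
      have hP : PD (fun t x => D t x + ι - w t x) t x (d' - d) (fun i => a' i + 0 - a i)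
          (fun i => b' i + 0 - b i) :=
        ⟨(hpd'.1.add_const ι).sub hpd.1, fun i => ((hpd'.2 i).add (D2.const ι)).sub (hpd.2 i)⟩
      obtain ⟨h4, h5⟩ := hP.touch ht.1 hKx hz hzx hzt
      simp only [add_zero, Finset.sum_sub_distrib] at h5
      have : C * w t x = C * D t x + C * ι := by rw [← mul_add]; congr 1; linarith
      have := mul_pos hC hι
      linarith

lemma D2_normsq (x c : EuclideanSpace ℝ (Fin n)) (i : Fin n) :
    D2 (fun s => ‖x + s • EuclideanSpace.single i (1:ℝ) - c‖ ^ 2) (2 * (x - c) i) 2 := by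
  have h : ∀ s : ℝ, ‖x + s • EuclideanSpace.single i (1:ℝ) - c‖ ^ 2
      = ‖x - c‖ ^ 2 + 2 * (x - c) i * s + s ^ 2 := by
    intro s
    have : x + s • EuclideanSpace.single i (1:ℝ) - c
        = (x - c) + s • EuclideanSpace.single i (1:ℝ) := by abel
    rw [this, norm_add_sq_real, inner_smul_right, EuclideanSpace.inner_single_right, norm_smul]
    simp
    ring
  refine D2.congr (φ := fun s => ‖x - c‖ ^ 2 + 2 * (x - c) i * s + s ^ 2)
    ⟨fun s => 2 * (x - c) i + 2 * s, ?_, by simp, ?_⟩ h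
  · refine Eventually.of_forall fun s => ?_
    have := (((hasDerivAt_id s).const_mul (2 * (x - c) i)).const_add (‖x - c‖ ^ 2)).add
      ((hasDerivAt_id s).pow 2)
    refine this.congr_deriv ?_
    simp
  · have := ((hasDerivAt_id (0:ℝ)).const_mul 2).const_add (2 * (x - c) i)
    exact this.congr_deriv (by simp)

lemma D2_radial (x c : EuclideanSpace ℝ (Fin n)) (i : Fin n) {F F1 : ℝ → ℝ} {F2 : ℝ}
    (hF : ∀ s, HasDerivAt F (F1 s) s) (hF1 : HasDerivAt F1 F2 (‖x - c‖ ^ 2)) :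
    D2 (fun s => F (‖x + s • EuclideanSpace.single i (1:ℝ) - c‖ ^ 2))
      (F1 (‖x - c‖ ^ 2) * (2 * (x - c) i))
      (F2 * (2 * (x - c) i) ^ 2 + F1 (‖x - c‖ ^ 2) * 2) :=
  (D2_normsq x c i).comp (by simp) (Eventually.of_forall hF) hF1

lemma sum_radial (y : EuclideanSpace ℝ (Fin n)) (A B : ℝ) :
    ∑ i, (A * (2 * y i) ^ 2 + B * 2) = 4 * A * ‖y‖ ^ 2 + 2 * n * B := by
  rw [EuclideanSpace.real_norm_sq_eq, Finset.sum_add_distrib, Finset.mul_sum]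
  simp
  congr 1
  · apply Finset.sum_congr rfl; intros; ring
  · ring

/-- Positivity on a ball at one time persists. -/
lemma SuperSol.posBall {Ω : Set (EuclideanSpace ℝ (Fin n))} {C r δ t0 T : ℝ}
    (c : EuclideanSpace ℝ (Fin n)) (hC : 0 < C) (hr : 0 < r) (hδ : 0 < δ) (h0 : 0 < t0)
    (hb : closedBall c r ⊆ Ω) :
    ∃ δ' > 0, ∀ T' ≤ T, ∀ D, SuperSol Ω T' C D → (∀ x ∈ closedBall c r, δ ≤ D t0 x) →
      ∀ t ∈ Ico t0 T', ∀ x ∈ ball c (r / 2), δ' ≤ D t x := by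
  set Λ : ℝ := (8 + 4 * n) ^ 2 / (32 * r ^ 2) with hΛ
  have hΛ0 : 0 ≤ Λ := by positivity
  refine ⟨δ / r ^ 4 * Real.exp (-(Λ + C) * (T - t0)) * (3 * r ^ 2 / 4) ^ 2, by positivity, ?_⟩
  intro T' hT' D hD hstart t ht x hx
  set w : ℝ → EuclideanSpace ℝ (Fin n) → ℝ := fun t x =>
    δ / r ^ 4 * Real.exp (-(Λ + C) * (t - t0)) * (r ^ 2 - ‖x - c‖ ^ 2) ^ 2 with hw
  have hbar : w t x ≤ D t x := by
    refine hD.barrier hC (isCompact_closedBall c r) hb h0 ht.2 ?_ ?_ ?_ t ⟨ht.1, le_refl _⟩ x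
      (ball_subset_closedBall.trans (closedBall_subset_closedBall (by linarith)) hx)
    · apply Continuous.continuousOn
      simp only [hw, Function.uncurry_def]
      fun_prop
    · intro y hy
      refine le_trans ?_ (hstart y hy)
      have hy' : ‖y - c‖ ≤ r := by simpa [dist_eq_norm] using hy
      have h1 : (r ^ 2 - ‖y - c‖ ^ 2) ^ 2 ≤ r ^ 4 := by
        have ha := norm_nonneg (y - c)
        have hb : ‖y - c‖ ^ 2 ≤ r ^ 2 := by gcongr
        have : (r ^ 2 - ‖y - c‖ ^ 2) ^ 2 ≤ (r ^ 2) ^ 2 := by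
          apply pow_le_pow_left₀ <;> nlinarith
        calc _ ≤ _ := this
          _ = _ := by ring
      simp only [hw, sub_self, mul_zero, Real.exp_zero, mul_one]
      calc δ / r ^ 4 * (r ^ 2 - ‖y - c‖ ^ 2) ^ 2 ≤ δ / r ^ 4 * r ^ 4 := by gcongr
        _ = δ := by field_simp
    · intro s hs y hy
      have hsT : s ∈ Ioo 0 T' := ⟨h0.trans hs.1, lt_of_le_of_lt hs.2 ht.2⟩
      have hy' : ‖y - c‖ ≤ r := by simpa [dist_eq_norm] using hy
      rcases eq_or_lt_of_le hy' with he | hlt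
      · left
        simp only [hw, he, sub_self]
        simpa using hD.nonneg s hsT y (hb hy)
      · right
        refine ⟨closedBall_mem_nhds_of_mem (by simpa [dist_eq_norm] using hlt), fun _ => ?_⟩
        set k := δ / r ^ 4 * Real.exp (-(Λ + C) * (s - t0)) with hk
        have hk0 : 0 < k := by positivity
        refine ⟨-(Λ + C) * w s y, _, _, ⟨?_, fun i => D2.const_mul k (D2_radial y c i
          (F := fun ρ => (r ^ 2 - ρ) ^ 2) (F1 := fun ρ => -2 * (r ^ 2 - ρ)) (F2 := 2) ?_ ?_)⟩, ?_⟩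
        · simp only [hw]
          have h1 : HasDerivAt (fun s => -(Λ + C) * (s - t0)) (-(Λ + C)) s := by
            simpa using ((hasDerivAt_id s).sub_const t0).const_mul (-(Λ + C))
          have := ((h1.exp).const_mul (δ / r ^ 4)).mul_const ((r ^ 2 - ‖y - c‖ ^ 2) ^ 2)
          exact this.congr_deriv (by ring)
        · intro ρ
          have := ((hasDerivAt_id ρ).const_sub (r ^ 2)).pow 2
          exact this.congr_deriv (by simp)
        · have := ((hasDerivAt_id (‖y - c‖ ^ 2)).const_sub (r ^ 2)).const_mul (-2)
          exact this.congr_deriv (by simp)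
        · rw [← Finset.mul_sum, sum_radial]
          have hwk : w s y = k * (r ^ 2 - ‖y - c‖ ^ 2) ^ 2 := rfl
          rw [hwk]
          set ρ := ‖y - c‖ ^ 2
          have h3 : 0 ≤ 4 * 2 * ρ + 2 * n * (-2 * (r ^ 2 - ρ)) + Λ * (r ^ 2 - ρ) ^ 2 := by
            have hΛr : 32 * r ^ 2 * Λ = (8 + 4 * n) ^ 2 := by rw [hΛ]; field_simp
            have : 0 ≤ 32 * r ^ 2 * (4 * 2 * ρ + 2 * n * (-2 * (r ^ 2 - ρ)) + Λ * (r ^ 2 - ρ) ^ 2) := by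
              have e : 32 * r ^ 2 * (4 * 2 * ρ + 2 * n * (-2 * (r ^ 2 - ρ)) + Λ * (r ^ 2 - ρ) ^ 2)
                = ((8 + 4 * n) * (r ^ 2 - ρ) - 16 * r ^ 2) ^ 2 := by
                linear_combination (r ^ 2 - ρ) ^ 2 * hΛr
              rw [e]; positivity
            exact nonneg_of_mul_nonneg_right this (by positivity)
          nlinarith [mul_nonneg hk0.le h3]
  refine le_trans ?_ hbar
  have hx' : ‖x - c‖ < r / 2 := by simpa [dist_eq_norm] using hx
  have h1 : 3 * r ^ 2 / 4 ≤ r ^ 2 - ‖x - c‖ ^ 2 := by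
    have := norm_nonneg (x - c); nlinarith
  simp only [hw]
  have h2 : -(Λ + C) * (T - t0) ≤ -(Λ + C) * (t - t0) := by
    apply mul_le_mul_of_nonpos_left <;> linarith [ht.2]
  gcongr

/-- Spreading of positivity to a larger ball. -/
lemma SuperSol.spread {Ω : Set (EuclideanSpace ℝ (Fin n))} {C r R δ s s' : ℝ}
    (c : EuclideanSpace ℝ (Fin n)) (hC : 0 < C) (hr : 0 < r) (hR : 0 < R) (hδ : 0 < δ) (h0 : 0 < s)
    (hs : s < s') (hb : closedBall c R ⊆ Ω) :
    ∃ δ' > 0, ∀ T', ∀ D, SuperSol Ω T' C D →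
      (∀ t ∈ Ico s T', ∀ x ∈ ball c r ∩ Ω, δ ≤ D t x) →
      ∀ t ∈ Ico s' T', ∀ x ∈ ball c (R / 2), δ' ≤ D t x := by
  obtain ⟨A, hA0, hA1, hA2⟩ : ∃ A : ℝ, 0 < A ∧ 4 ≤ A * R ^ 2 ∧
      A * R ^ 2 ≤ (4 * A ^ 2 * r ^ 2 - 2 * n * A - C) * (s' - s) := by
    have t1 : Tendsto (fun A : ℝ => A * (A * (4 * r ^ 2 * (s' - s)) - (2 * n * (s' - s) + R ^ 2)))
        atTop atTop := by
      apply tendsto_id.atTop_mul_atTop₀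
      apply tendsto_atTop_add_const_right
      apply tendsto_id.atTop_mul_const
      have : 0 < s' - s := by linarith
      positivity
    have t2 : Tendsto (fun A : ℝ => A * R ^ 2) atTop atTop :=
      tendsto_id.atTop_mul_const (by positivity)
    obtain ⟨A, h1, h2, h3⟩ := ((eventually_gt_atTop 0).and ((t2.eventually_ge_atTop 4).and
      (t1.eventually_ge_atTop (C * (s' - s))))).exists
    exact ⟨A, h1, h2, by nlinarith⟩
  set Kc := 4 * A ^ 2 * r ^ 2 - 2 * n * A - C with hKc
  have hKpos : 0 < Kc := by
    by_contra hneg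
    push Not at hneg
    have : Kc * (s' - s) ≤ 0 := mul_nonpos_of_nonpos_of_nonneg hneg (by linarith)
    linarith
  have hpos : 0 < Real.exp (-(A * R ^ 2 / 4)) - 2 * Real.exp (-(A * R ^ 2)) := by
    have h1 : Real.exp (-(A * R ^ 2 / 4)) = Real.exp (-(A * R ^ 2)) * Real.exp (3 * (A * R ^ 2) / 4) := by
      rw [← Real.exp_add]; congr 1; ring
    have h2 := Real.add_one_le_exp (3 * (A * R ^ 2) / 4)
    have h3 := Real.exp_pos (-(A * R ^ 2))
    rw [h1]
    nlinarith
  refine ⟨δ * (Real.exp (-(A * R ^ 2 / 4)) - 2 * Real.exp (-(A * R ^ 2))), by positivity, ?_⟩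
  intro T' D hD hlow t ht x hx
  set w : ℝ → EuclideanSpace ℝ (Fin n) → ℝ := fun t x =>
    δ * ((Real.exp (-(A * ‖x - c‖ ^ 2)) - Real.exp (-(A * R ^ 2))) - Real.exp (-(Kc * (t - s)))) with hw
  have hbar : w t x ≤ D t x := by
    refine hD.barrier hC (isCompact_closedBall c R) hb h0 ht.2 ?_ ?_ ?_ t
      ⟨hs.le.trans ht.1, le_refl _⟩ x
      (ball_subset_closedBall.trans (closedBall_subset_closedBall (by linarith)) hx)
    · apply Continuous.continuousOn
      simp only [hw, Function.uncurry_def]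
      fun_prop
    · intro y hy
      refine le_trans ?_ (hD.nonneg s ⟨h0, hs.trans_le ht.1 |>.trans ht.2⟩ y (hb hy))
      have h1 : Real.exp (-(A * ‖y - c‖ ^ 2)) ≤ 1 := Real.exp_le_one_iff.2 (by
        have : 0 ≤ A * ‖y - c‖ ^ 2 := by positivity
        linarith)
      have h2 := Real.exp_pos (-(A * R ^ 2))
      simp only [hw, sub_self, mul_zero, neg_zero, Real.exp_zero]
      apply mul_nonpos_of_nonneg_of_nonpos hδ.le; linarith
    · intro τ hτ y hy
      have hτT : τ ∈ Ioo 0 T' := ⟨h0.trans hτ.1, lt_of_le_of_lt hτ.2 ht.2⟩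
      have hy' : ‖y - c‖ ≤ R := by simpa [dist_eq_norm] using hy
      have hE := Real.exp_pos (-(Kc * (τ - s)))
      have hE2 := Real.exp_pos (-(A * R ^ 2))
      rcases eq_or_lt_of_le hy' with he | hlt
      · left
        refine le_trans ?_ (hD.nonneg τ hτT y (hb hy))
        simp only [hw, he, sub_self]
        apply mul_nonpos_of_nonneg_of_nonpos hδ.le; linarith
      · rcases lt_or_ge ‖y - c‖ r with hyr | hyr
        · left
          refine le_trans ?_ (hlow τ ⟨hτ.1.le, hτT.2⟩ y ⟨by simpa [dist_eq_norm] using hyr, hb hy⟩)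
          have h1 : Real.exp (-(A * ‖y - c‖ ^ 2)) ≤ 1 := Real.exp_le_one_iff.2 (by
            have : 0 ≤ A * ‖y - c‖ ^ 2 := by positivity
            linarith)
          simp only [hw]
          calc _ ≤ δ * 1 := by gcongr; linarith
            _ = δ := mul_one _
        · right
          refine ⟨closedBall_mem_nhds_of_mem (by simpa [dist_eq_norm] using hlt), fun hwpos => ?_⟩
          have hd : ∀ ρ, HasDerivAt (fun ρ => Real.exp (-(A * ρ))) (-A * Real.exp (-(A * ρ))) ρ := by
            intro ρ
            have := (((hasDerivAt_id ρ).const_mul A).neg).exp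
            exact this.congr_deriv (by simp; ring)
          refine ⟨δ * (Kc * Real.exp (-(Kc * (τ - s)))), _, _, ⟨?_, fun i => D2.const_mul δ
            (((D2_radial y c i (F := fun ρ => Real.exp (-(A * ρ)))
              (F1 := fun ρ => -A * Real.exp (-(A * ρ)))
              (F2 := -A * (-A * Real.exp (-(A * ‖y - c‖ ^ 2)))) hd ((hd _).const_mul (-A))).sub
              (D2.const (Real.exp (-(A * R ^ 2))))).sub
              (D2.const (Real.exp (-(Kc * (τ - s))))))⟩, ?_⟩
          · simp only [hw]
            have h1 : HasDerivAt (fun τ => -(Kc * (τ - s))) (-Kc) τ := by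
              have := (((hasDerivAt_id τ).sub_const s).const_mul Kc).neg
              exact this.congr_deriv (by simp)
            have := ((h1.exp).const_sub (Real.exp (-(A * ‖y - c‖ ^ 2)) - Real.exp (-(A * R ^ 2)))).const_mul δ
            exact this.congr_deriv (by ring)
          · simp only [sub_zero]
            rw [← Finset.mul_sum, sum_radial]
            have hwk : w τ y = δ * ((Real.exp (-(A * ‖y - c‖ ^ 2)) - Real.exp (-(A * R ^ 2))) - Real.exp (-(Kc * (τ - s)))) := rfl
            have hin := pos_of_mul_pos_right (hwk ▸ hwpos) hδ.le
            rw [hwk]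
            have hG := Real.exp_pos (-(A * ‖y - c‖ ^ 2))
            set G := Real.exp (-(A * ‖y - c‖ ^ 2))
            set E := Real.exp (-(Kc * (τ - s)))
            set H := Real.exp (-(A * R ^ 2))
            have e1 : r ^ 2 ≤ ‖y - c‖ ^ 2 := by gcongr
            have e2 : Kc * E ≤ Kc * G := by gcongr; linarith
            have e3 : Kc * G + C * G ≤ 4 * (-A * (-A * G)) * ‖y - c‖ ^ 2 + 2 * n * (-A * G) := by
              have : A ^ 2 * G * r ^ 2 ≤ A ^ 2 * G * ‖y - c‖ ^ 2 := by gcongr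
              rw [hKc]; nlinarith
            have e4 : C * (G - H - E) ≤ C * G := by gcongr; linarith
            have e5 : Kc * E ≤ 4 * (-A * (-A * G)) * ‖y - c‖ ^ 2 + 2 * n * (-A * G) - C * (G - H - E) := by
              linarith
            have := mul_le_mul_of_nonneg_left e5 hδ.le
            nlinarith
  refine le_trans ?_ hbar
  have hx' : ‖x - c‖ < R / 2 := by simpa [dist_eq_norm] using hx
  have h1 : ‖x - c‖ ^ 2 ≤ R ^ 2 / 4 := by
    have := norm_nonneg (x - c); nlinarith
  simp only [hw]
  have h2 : Real.exp (-(A * R ^ 2 / 4)) ≤ Real.exp (-(A * ‖x - c‖ ^ 2)) := by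
    apply Real.exp_le_exp.2; nlinarith
  have h3 : Real.exp (-(Kc * (t - s))) ≤ Real.exp (-(A * R ^ 2)) := by
    apply Real.exp_le_exp.2
    have : Kc * (s' - s) ≤ Kc * (t - s) := by gcongr; exact ht.1
    linarith
  apply mul_le_mul_of_nonneg_left _ hδ.le
  linarith

end


section
variable {n : ℕ}

structure Sol (Ω : Set (EuclideanSpace ℝ (Fin n))) (T : ℝ) (V : EuclideanSpace ℝ (Fin n) → ℝ)
    (f : ℝ → ℝ) (u : ℝ → EuclideanSpace ℝ (Fin n) → ℝ) : Prop where
  opn : IsOpen Ω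
  nonneg : ∀ t ∈ Ioo 0 T, ∀ x ∈ Ω, 0 ≤ u t x
  Vnonneg : ∀ x ∈ Ω, 0 ≤ V x
  cont : ContinuousOn (Function.uncurry u) (Ioo 0 T ×ˢ Ω)
  mono : ∀ x ∈ Ω, MonotoneOn (fun t => u t x) (Ioo 0 T)
  pd : ∀ t ∈ Ioo 0 T, ∀ x ∈ Ω, ∃ d a b, PD u t x d a b ∧ d = ∑ i, b i + V x * f (u t x)
  dcont : ∀ t ∈ Ioo 0 T, ContinuousOn (fun x => deriv (fun s => u s x) t) Ω

lemma joint_cont {Ω : Set (EuclideanSpace ℝ (Fin n))} (hΩ : IsOpen Ω) {T : ℝ}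
    {u : ℝ → EuclideanSpace ℝ (Fin n) → ℝ}
    (hm : ∀ x ∈ Ω, MonotoneOn (fun t => u t x) (Ioo 0 T))
    (ht : ∀ t ∈ Ioo 0 T, ∀ x ∈ Ω, ContinuousAt (fun s => u s x) t)
    (hx : ∀ t ∈ Ioo 0 T, ∀ x ∈ Ω, ContinuousAt (fun y => u t y) x) :
    ContinuousOn (Function.uncurry u) (Ioo 0 T ×ˢ Ω) := by
  rintro ⟨t, x⟩ ⟨htT, hxΩ⟩
  apply ContinuousAt.continuousWithinAt
  simp only at htT hxΩ
  rw [Metric.continuousAt_iff']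
  intro ε hε
  have h1 : ∀ᶠ s in nhds t, s ∈ Ioo 0 T ∧ |u s x - u t x| < ε / 2 :=
    Filter.Eventually.and (Ioo_mem_nhds htT.1 htT.2) (Metric.continuousAt_iff'.1 (ht t htT x hxΩ) (ε / 2) (by linarith))
  obtain ⟨ρ, hρ, hball⟩ := Metric.eventually_nhds_iff.1 h1
  obtain ⟨hm1, hm2⟩ := hball (y := t - ρ / 2) (by rw [Real.dist_eq]; simp; rw [abs_of_pos] <;> linarith)
  obtain ⟨hp1, hp2⟩ := hball (y := t + ρ / 2) (by rw [Real.dist_eq]; simp; rw [abs_of_pos] <;> linarith)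
  have e1 := Metric.continuousAt_iff'.1 (hx _ hm1 x hxΩ) (ε / 2) (by linarith)
  have e2 := Metric.continuousAt_iff'.1 (hx _ hp1 x hxΩ) (ε / 2) (by linarith)
  have e3 : ∀ᶠ y in nhds x, y ∈ Ω := hΩ.mem_nhds hxΩ
  have e4 : ∀ᶠ s in nhds t, s ∈ Ioo (t - ρ / 2) (t + ρ / 2) :=
    Ioo_mem_nhds (by linarith) (by linarith)
  rw [nhds_prod_eq]
  filter_upwards [e4.prod_mk (e1.and (e2.and e3))] with ⟨s, y⟩ ⟨hs, h2, h3, h4⟩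
  simp only [Function.uncurry_apply_pair, Real.dist_eq] at hs h2 h3 h4 ⊢
  have hs' : s ∈ Ioo 0 T := ⟨by linarith [hm1.1, hs.1], by linarith [hp1.2, hs.2]⟩
  have l1 := hm y h4 hm1 hs' hs.1.le
  have l2 := hm y h4 hs' hp1 hs.2.le
  simp only at l1 l2
  rw [abs_lt] at *
  constructor <;> linarith

lemma Sol.quot_super {Ω : Set (EuclideanSpace ℝ (Fin n))} {T : ℝ}
    {V : EuclideanSpace ℝ (Fin n) → ℝ} {f : ℝ → ℝ} {u : ℝ → EuclideanSpace ℝ (Fin n) → ℝ}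
    (hu : Sol Ω T V f u) {L B C : ℝ} (hL0 : 0 ≤ L) (hL : ∀ a b, 0 ≤ a → a ≤ b → -L * (b - a) ≤ f b - f a)
    (hB : ∀ x ∈ Ω, V x ≤ B) (hC : B * L ≤ C) {τ : ℝ} (hτ : 0 < τ) :
    SuperSol Ω (T - τ) C (fun t x => (u (t + τ) x - u t x) / τ) := by
  have hmem : ∀ t ∈ Ioo 0 (T - τ), t ∈ Ioo 0 T ∧ t + τ ∈ Ioo 0 T := fun t ht =>
    ⟨⟨ht.1, by linarith [ht.2]⟩, ⟨by linarith [ht.1], by linarith [ht.2]⟩⟩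
  have hmon : ∀ t ∈ Ioo 0 (T - τ), ∀ x ∈ Ω, u t x ≤ u (t + τ) x := fun t ht x hx =>
    hu.mono x hx (hmem t ht).1 (hmem t ht).2 (by linarith)
  refine ⟨?_, ?_, ?_⟩
  · apply ContinuousOn.div_const
    apply ContinuousOn.sub
    · exact hu.cont.comp (f := fun q : ℝ × EuclideanSpace ℝ (Fin n) => (q.1 + τ, q.2)) (by fun_prop)
        (fun q hq => ⟨(hmem _ hq.1).2, hq.2⟩)
    · exact hu.cont.mono (fun q hq => ⟨(hmem _ hq.1).1, hq.2⟩)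
  · intro t ht x hx
    exact div_nonneg (by linarith [hmon t ht x hx]) hτ.le
  · intro t ht x hx
    obtain ⟨d, a, b, hp, hd⟩ := hu.pd t (hmem t ht).1 x hx
    obtain ⟨d', a', b', hp', hd'⟩ := hu.pd _ (hmem t ht).2 x hx
    refine ⟨(d' - d) / τ, fun i => τ⁻¹ * (a' i - a i), fun i => τ⁻¹ * (b' i - b i), ⟨?_, ?_⟩, ?_⟩
    · exact ((hp'.1.comp_add_const t τ).sub hp.1).div_const τ
    · intro i
      refine (((hp'.2 i).sub (hp.2 i)).const_mul τ⁻¹).congr fun s => ?_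
      exact div_eq_inv_mul _ _
    · rw [← Finset.mul_sum, Finset.sum_sub_distrib, hd, hd', div_eq_inv_mul, div_eq_inv_mul]
      have h1 := hL _ _ (hu.nonneg t (hmem t ht).1 x hx) (hmon t ht x hx)
      have h2 := mul_le_mul_of_nonneg_left h1 (hu.Vnonneg x hx)
      have h3 : V x * L ≤ C := le_trans (mul_le_mul_of_nonneg_right (hB x hx) hL0) hC
      have h4 := mul_le_mul_of_nonneg_right h3 (sub_nonneg.2 (hmon t ht x hx))
      have h5 : (∑ i, b' i - ∑ i, b i) - C * (u (t + τ) x - u t x) ≤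
        ∑ i, b' i + V x * f (u (t + τ) x) - (∑ i, b i + V x * f (u t x)) := by nlinarith
      have h6 := mul_le_mul_of_nonneg_left h5 (inv_pos.2 hτ).le
      calc _ = τ⁻¹ * ((∑ i, b' i - ∑ i, b i) - C * (u (t + τ) x - u t x)) := by ring
        _ ≤ _ := h6

lemma Sol.positivity {Ω : Set (EuclideanSpace ℝ (Fin n))} {T : ℝ}
    {V : EuclideanSpace ℝ (Fin n) → ℝ} {f : ℝ → ℝ} {u : ℝ → EuclideanSpace ℝ (Fin n) → ℝ}
    (hu : Sol Ω T V f u) (hconn : IsPreconnected Ω)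
    {L B : ℝ} (hL0 : 0 ≤ L) (hL : ∀ a b, 0 ≤ a → a ≤ b → -L * (b - a) ≤ f b - f a)
    (hB : ∀ x ∈ Ω, V x ≤ B) {t1 : ℝ} (ht1 : t1 ∈ Ioo 0 T) {x1 : EuclideanSpace ℝ (Fin n)}
    (hx1 : x1 ∈ Ω) (hpos : 0 < deriv (fun s => u s x1) t1) {s : ℝ} (hs : t1 < s)
    {S : Set (EuclideanSpace ℝ (Fin n))} (hS : IsCompact S) (hSΩ : S ⊆ Ω) :
    ∃ δ > 0, ∃ κ > 0, ∀ τ ∈ Ioo 0 κ, ∀ t ∈ Ico s (T - τ), ∀ x ∈ S,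
      δ ≤ (u (t + τ) x - u t x) / τ := by
  set C := |B| * L + 1 with hCdef
  have hC : 0 < C := by positivity
  have hsup : ∀ τ, 0 < τ → SuperSol Ω (T - τ) C (fun t x => (u (t + τ) x - u t x) / τ) :=
    fun τ hτ => hu.quot_super hL0 hL hB (by nlinarith [le_abs_self B]) hτ
  -- the set of good points
  let P : EuclideanSpace ℝ (Fin n) → Prop := fun x => ∀ s, t1 < s → ∃ r > 0, ∃ δ > 0, ∃ κ > 0,
    ∀ τ ∈ Ioo 0 κ, ∀ t ∈ Ico s (T - τ), ∀ y ∈ ball x r ∩ Ω, δ ≤ (u (t + τ) y - u t y) / τ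
  -- Baire
  have hstart : ∃ x ∈ Ω, P x := by
    set δ := deriv (fun s => u s x1) t1 with hδ
    have hev : ∀ᶠ x in nhds x1, x ∈ Ω ∧ δ / 2 < deriv (fun s => u s x) t1 :=
      Filter.Eventually.and (hu.opn.mem_nhds hx1) (((hu.dcont t1 ht1).continuousAt (hu.opn.mem_nhds hx1)).eventually
        (lt_mem_nhds (by linarith)))
    obtain ⟨r, hr, hball⟩ := Metric.eventually_nhds_iff.1 hev
    set r' := r / 2 with hr'
    have hsub : ∀ x ∈ closedBall x1 r', x ∈ Ω ∧ δ / 2 < deriv (fun s => u s x) t1 := fun x hx =>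
      hball (lt_of_le_of_lt (mem_closedBall.1 hx) (by linarith))
    have hk0 : 0 < T - t1 := by linarith [ht1.2]
    let A : ℕ → Set (EuclideanSpace ℝ (Fin n)) := fun k =>
      (⋂ τ ∈ Ioo (0:ℝ) (min (1 / (k + 1)) (T - t1)),
        (closedBall x1 r' ∩ {x | δ / 4 ≤ (u (t1 + τ) x - u t1 x) / τ})) ∪ (ball x1 r')ᶜ
    have hAc : ∀ k, IsClosed (A k) := by
      intro k
      refine IsClosed.union (isClosed_biInter fun τ hτ => ?_) isOpen_ball.isClosed_compl
      have hτ2 : τ < T - t1 := lt_of_lt_of_le hτ.2 (min_le_right _ _)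
      have hcx : ∀ t ∈ Ioo 0 T, ContinuousOn (fun x => u t x) (closedBall x1 r') := fun t ht =>
        hu.cont.comp (f := fun x : EuclideanSpace ℝ (Fin n) => (t, x)) (by fun_prop)
          (fun x hx => ⟨ht, (hsub x hx).1⟩)
      have : ContinuousOn (fun x => (u (t1 + τ) x - u t1 x) / τ) (closedBall x1 r') :=
        ((hcx _ ⟨by linarith [ht1.1, hτ.1], by linarith⟩).sub (hcx _ ht1)).div_const τ
      exact this.preimage_isClosed_of_isClosed isClosed_closedBall isClosed_Ici
    have hAu : ⋃ k, A k = univ := by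
      refine eq_univ_of_forall fun x => ?_
      by_cases hx : x ∈ ball x1 r'
      · have hx' := ball_subset_closedBall hx
        obtain ⟨hxΩ, hder⟩ := hsub x hx'
        obtain ⟨d, a, b, hp, -⟩ := hu.pd t1 ht1 x hxΩ
        have hdd := hp.1
        rw [hdd.deriv] at hder
        have h1 := (hasDerivAt_iff_tendsto_slope.1 hdd).eventually_const_lt (show δ / 4 < d by linarith)
        have h2 : nhdsWithin t1 (Ioi t1) ≤ nhdsWithin t1 {t1}ᶜ :=
          nhdsWithin_mono _ (fun x hx => ne_of_gt hx)
        obtain ⟨q, hq, hq2⟩ := mem_nhdsGT_iff_exists_Ioo_subset.1 (h1.filter_mono h2)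
        have hq : t1 < q := hq
        obtain ⟨k, hk⟩ := exists_nat_one_div_lt (sub_pos.2 hq)
        refine mem_iUnion.2 ⟨k, Or.inl ?_⟩
        refine mem_iInter₂.2 fun τ hτ => ⟨hx', ?_⟩
        have hτ2 : τ < 1 / (k + 1) := lt_of_lt_of_le hτ.2 (min_le_left _ _)
        have := hq2 (show t1 + τ ∈ Ioo t1 q from ⟨by linarith [hτ.1], by linarith⟩)
        simp only [mem_ofPred_eq, slope_def_field, add_sub_cancel_left] at this
        exact this.le
      · exact mem_iUnion.2 ⟨0, Or.inr hx⟩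
    obtain ⟨x2, hx2, hx2'⟩ := (dense_iUnion_interior_of_closed hAc hAu).inter_open_nonempty
      (ball x1 r') isOpen_ball ⟨x1, mem_ball_self (by linarith)⟩
    obtain ⟨k, hk⟩ := mem_iUnion.1 hx2'
    obtain ⟨ρ, hρ, hρsub⟩ := Metric.nhds_basis_closedBall.mem_iff.1
      (inter_mem (mem_interior_iff_mem_nhds.1 hk) (isOpen_ball.mem_nhds hx2))
    have hρΩ : closedBall x2 ρ ⊆ Ω := fun y hy =>
      (hsub y (ball_subset_closedBall (hρsub hy).2)).1
    refine ⟨x2, hρΩ (mem_closedBall_self hρ.le), fun s hs => ?_⟩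
    obtain ⟨δ', hδ', hfin⟩ := SuperSol.posBall (T := T) x2 hC hρ (show 0 < δ / 4 by linarith) ht1.1 hρΩ
    refine ⟨ρ / 2, by linarith, δ', hδ', min (1 / (k + 1)) (T - t1), by positivity, ?_⟩
    intro τ hτ t ht y hy
    refine hfin (T - τ) (by linarith [hτ.1]) _ (hsup τ hτ.1) ?_ t ⟨hs.le.trans ht.1, ht.2⟩ y hy.1
    intro y hy
    rcases (hρsub hy).1 with h1 | h1
    · exact (mem_iInter₂.1 h1 τ hτ).2
    · exact absurd (hρsub hy).2 h1
  have hall : ∀ x ∈ Ω, P x := by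
    have hsubset : Ω ⊆ {x | P x} := by
      obtain ⟨x2, hx2, hP2⟩ := hstart
      have hPopen : IsOpen {x | x ∈ Ω ∧ ∃ ρ > 0, ∃ c, closedBall c ρ ⊆ Ω ∧ P c ∧ dist x c < ρ / 2} := by
        rw [Metric.isOpen_iff]
        rintro x ⟨hx, ρ, hρ, c, hc, hPc, hd⟩
        obtain ⟨e, he, hsub⟩ := Metric.isOpen_iff.1 hu.opn x hx
        refine ⟨min e (ρ / 2 - dist x c), lt_min he (by linarith), fun y hy => ⟨hsub ?_, ρ, hρ, c, hc, hPc, ?_⟩⟩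
        · exact ball_subset_ball (min_le_left _ _) hy
        · have := lt_of_lt_of_le (mem_ball.1 hy) (min_le_right _ _)
          linarith [dist_triangle y x c]
      have hspread : ∀ x, (∃ ρ > 0, ∃ c, closedBall c ρ ⊆ Ω ∧ P c ∧ dist x c < ρ / 2) → P x := by
        rintro x ⟨ρ, hρ, c, hc, hPc, hd⟩ s hs
        obtain ⟨r, hr, δ, hδ, κ, hκ, h⟩ := hPc ((t1 + s) / 2) (by linarith)
        obtain ⟨δ', hδ', hfin⟩ := SuperSol.spread (s := (t1 + s) / 2) (s' := s) c hC hr hρ hδ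
          (by linarith [ht1.1]) (by linarith) hc
        refine ⟨ρ / 2 - dist x c, by linarith, δ', hδ', κ, hκ, ?_⟩
        intro τ hτ t ht y hy
        refine hfin _ _ (hsup τ hτ.1) (h τ hτ) t ht y ?_
        have := mem_ball.1 hy.1
        rw [mem_ball]
        linarith [dist_triangle y x c]
      have hsub : Ω ⊆ {x | x ∈ Ω ∧ ∃ ρ > 0, ∃ c, closedBall c ρ ⊆ Ω ∧ P c ∧ dist x c < ρ / 2} := by
        apply hconn.subset_of_closure_inter_subset hPopen
        · obtain ⟨e, he, hsub⟩ := Metric.nhds_basis_closedBall.mem_iff.1 (hu.opn.mem_nhds hx2)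
          exact ⟨x2, hx2, hx2, e, he, x2, hsub, hP2, by simpa using he⟩
        · rintro x ⟨hxcl, hx⟩
          obtain ⟨e, he, hsub⟩ := Metric.nhds_basis_closedBall.mem_iff.1 (hu.opn.mem_nhds hx)
          obtain ⟨c, hc, hdc⟩ := Metric.mem_closure_iff.1 hxcl (e / 4) (by linarith)
          refine ⟨hx, e / 2, by linarith, c, ?_, hspread c hc.2, by linarith⟩
          intro y hy
          apply hsub
          rw [mem_closedBall] at *
          linarith [dist_triangle y c x, dist_comm x c]
      exact fun x hx => hspread x (hsub hx).2
    exact hsubset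
  refine hS.induction_on (p := fun S' => ∃ δ > 0, ∃ κ > 0, ∀ τ ∈ Ioo 0 κ, ∀ t ∈ Ico s (T - τ),
    ∀ x ∈ S', δ ≤ (u (t + τ) x - u t x) / τ) ?_ ?_ ?_ ?_
  · exact ⟨1, one_pos, 1, one_pos, fun _ _ _ _ x hx => absurd hx (notMem_empty x)⟩
  · rintro A A' hAA ⟨δ, hδ, κ, hκ, h⟩
    exact ⟨δ, hδ, κ, hκ, fun τ hτ t ht x hx => h τ hτ t ht x (hAA hx)⟩
  · rintro A A' ⟨δ, hδ, κ, hκ, h⟩ ⟨δ', hδ', κ', hκ', h'⟩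
    refine ⟨min δ δ', lt_min hδ hδ', min κ κ', lt_min hκ hκ', fun τ hτ t ht x hx => ?_⟩
    rcases hx with hx | hx
    · exact (min_le_left _ _).trans (h τ ⟨hτ.1, hτ.2.trans_le (min_le_left _ _)⟩ t ht x hx)
    · exact (min_le_right _ _).trans (h' τ ⟨hτ.1, hτ.2.trans_le (min_le_right _ _)⟩ t ht x hx)
  · intro x hx
    obtain ⟨r, hr, δ, hδ, κ, hκ, h⟩ := hall x (hSΩ hx) s hs
    exact ⟨ball x r ∩ Ω, mem_nhdsWithin_of_mem_nhds (inter_mem (ball_mem_nhds x hr)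
      (hu.opn.mem_nhds (hSΩ hx))), δ, hδ, κ, hκ, h⟩

end


structure FData (p q : ℝ) (f F f1 F1 F2 : ℝ → ℝ) (s0 c1 c2 C3 C7 : ℝ) : Prop where
  hp : 1 < p
  hq1 : (p + 1) / 2 < q
  hq2 : q < p
  hs0 : 1 ≤ s0
  hc1 : 0 < c1
  hc2 : 0 < c2
  hC3 : 0 < C3
  hC7 : 0 < C7
  Fcont : ContinuousOn F (Ici 0)
  fF : ∀ s, 0 ≤ s → f s ≤ F s
  Fpos : ∀ s, s0 < s → 0 < F s
  tangent : ∀ s, s0 < s → ∀ s', s ≤ s' → f1 s * (s' - s) ≤ f s' - f s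
  dF : ∀ s, s0 < s → HasDerivAt F (F1 s) s
  dF1 : ∀ s, s0 < s → HasDerivAt F1 (F2 s) s
  low1 : ∀ s, s0 < s → c1 * s ^ (p + q - 1) ≤ f1 s * F s - F1 s * f s
  low2 : ∀ s, s0 < s → c2 * s ^ (q - 2) ≤ F2 s
  up1 : ∀ s, s0 < s → |F1 s| ≤ C3 * s ^ (p - 1)
  up0 : ∀ s, s0 < s → F s ≤ C3 * s ^ p
  low : ∀ s, s0 < s → s ^ p / 2 ≤ f s
  upf : ∀ s, 0 ≤ s → f s ≤ C7 * (1 + s ^ p)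

lemma f_lowlip {f : ℝ → ℝ} {p : ℝ} (hp : 1 < p) (hc : ContinuousOn f (Ici 0))
    (hd : ∀ s > 0, DifferentiableAt ℝ f s) (hconv : ConvexOn ℝ (Ici 0) f)
    {C₀ : ℝ} (hC : 0 < C₀) (hder : ∀ s ≥ (0:ℝ), |deriv f s| ≤ C₀ * (1 + s ^ (p - 1))) :
    ∀ a b, 0 ≤ a → a ≤ b → -(2 * C₀) * (b - a) ≤ f b - f a := by
  have hlow : ∀ s > 0, -(2 * C₀) ≤ deriv f s := by
    have h1 : ∀ s, 0 < s → s ≤ 1 → -(2 * C₀) ≤ deriv f s := by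
      intro s hs hs1
      have h2 := (abs_le.1 (hder s hs.le)).1
      have h3 : s ^ (p - 1) ≤ 1 := Real.rpow_le_one hs.le hs1 (by linarith)
      nlinarith
    intro s hs
    rcases le_or_gt s 1 with h | h
    · exact h1 s hs h
    · have := (hconv.subset Ioi_subset_Ici_self (convex_Ioi 0)).monotoneOn_deriv (fun x hx => hd x hx)
        (mem_Ioi.2 one_pos) (show s ∈ Ioi 0 from hs) h.le
      linarith [h1 1 one_pos le_rfl]
  have hm : MonotoneOn (fun s => f s + 2 * C₀ * s) (Ici 0) := by
    have hcont : ContinuousOn (fun s => f s + 2 * C₀ * s) (Ici 0) := hc.add (by fun_prop)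
    apply monotoneOn_of_deriv_nonneg (convex_Ici 0) hcont
    · intro s hs
      rw [interior_Ici] at hs
      exact ((hd s hs).add (by fun_prop)).differentiableWithinAt
    · intro s hs
      rw [interior_Ici] at hs
      have : HasDerivAt (fun s => f s + 2 * C₀ * s) (deriv f s + 2 * C₀) s := by
        have := (hd s hs).hasDerivAt.add ((hasDerivAt_id s).const_mul (2 * C₀))
        exact this.congr_deriv (by simp)
      rw [this.deriv]
      linarith [hlow s hs]
  intro a b ha hab
  have := hm (show a ∈ Ici 0 from ha) (show b ∈ Ici 0 from ha.trans hab) hab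
  simp only at this
  nlinarith

lemma exists_mu {p q : ℝ} (hq : q < p) : ∃ μ : ℝ, 0 < μ ∧ μ < 1 ∧ q * (1 - μ) < 1 - μ ^ p := by
  have h : HasDerivAt (fun x : ℝ => x ^ p) p 1 := by
    simpa using Real.hasDerivAt_rpow_const (x := 1) (p := p) (Or.inl one_ne_zero)
  have h1 := (hasDerivAt_iff_tendsto_slope.1 h).eventually_const_lt hq
  have h2 : nhdsWithin (1:ℝ) (Iio 1) ≤ nhdsWithin 1 {1}ᶜ :=
    nhdsWithin_mono _ (fun x hx => ne_of_lt hx)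
  have h3 : ∀ᶠ s in nhdsWithin (1:ℝ) (Iio 1), s ∈ Ioo (0:ℝ) 1 := Ioo_mem_nhdsLT one_pos
  obtain ⟨μ, hμ, hμ1, hμ2⟩ := ((h1.filter_mono h2).and h3).exists
  refine ⟨μ, hμ1, hμ2, ?_⟩
  rw [slope_def_field, Real.one_rpow, lt_div_iff_of_neg (by linarith)] at hμ
  linarith

lemma f_data {f : ℝ → ℝ} {p : ℝ} (hp : 1 < p) (hnn : ∀ s ≥ (0:ℝ), 0 ≤ f s)
    (hf_C2 : ContDiffOn ℝ 2 f (Ici 0)) (hconv : ConvexOn ℝ (Ici 0) f)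
    (hlim : Tendsto (fun s : ℝ => s ^ (-p) * f s) atTop (nhds 1))
    {C₀ : ℝ} (hC : 0 < C₀) (hder : ∀ s ≥ (0:ℝ), |deriv f s| ≤ C₀ * (1 + s ^ (p - 1))) :
    ∃ q F f1 F1 F2 s0 c1 c2 C3 C7, FData p q f F f1 F1 F2 s0 c1 c2 C3 C7 := by
  have hcd : ∀ s > 0, ContDiffAt ℝ 2 f s := fun s hs => hf_C2.contDiffAt (Ici_mem_nhds hs)
  have hd : ∀ s > 0, DifferentiableAt ℝ f s := fun s hs => (hcd s hs).differentiableAt (by simp)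
  have hdd : ∀ s > 0, DifferentiableAt ℝ (deriv f) s := by
    intro s hs
    obtain ⟨v, hv, hv2⟩ := (hcd s hs).eventually (by simp) |>.exists_mem
    have h1 : ContDiffAt ℝ 1 (fderiv ℝ f) s := (hcd s hs).fderiv_right (by norm_num)
    have h2 : ContDiffAt ℝ 1 (fun y => fderiv ℝ f y 1) s := h1.clm_apply contDiffAt_const
    have h3 : (fun y => fderiv ℝ f y 1) = deriv f := by ext y; simp
    rw [h3] at h2
    exact h2.differentiableAt (by simp)
  have hmono := (hconv.subset Ioi_subset_Ici_self (convex_Ioi 0)).monotoneOn_deriv (fun x hx => hd x hx)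
  have hdd0 : ∀ s > 0, 0 ≤ deriv (deriv f) s := by
    intro s hs
    have := hmono.derivWithin_nonneg (x := s)
    rwa [derivWithin_of_isOpen isOpen_Ioi hs] at this
  set q := (3 * p + 1) / 4 with hq
  set q' := (q + p) / 2 with hq'
  obtain ⟨μ, hμ0, hμ1, hμ⟩ := exists_mu (p := p) (q := q') (by linarith)
  have hlimμ : Tendsto (fun s : ℝ => (μ * s) ^ (-p) * f (μ * s)) atTop (nhds 1) :=
    hlim.comp (tendsto_id.const_mul_atTop hμ0)
  have hL : Tendsto (fun s : ℝ => s ^ (-p) * f s - μ ^ p * ((μ * s) ^ (-p) * f (μ * s))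
      - q' * (1 - μ) * (s ^ (-p) * f s)) atTop (nhds (1 - μ ^ p * 1 - q' * (1 - μ) * 1)) :=
    (hlim.sub (hlimμ.const_mul _)).sub (hlim.const_mul _)
  have hev := ((hL.eventually_const_lt (show (0:ℝ) < _ by linarith)).and
    ((hlim.eventually_const_lt (show (1/2:ℝ) < 1 by norm_num)).and
    (hlim.eventually_lt_const (show (1:ℝ) < 2 by norm_num)))).and (eventually_ge_atTop (1:ℝ))
  obtain ⟨s0', hs0'⟩ := eventually_atTop.1 hev
  set s0 := max s0' 1 with hs0
  have hq1 : 1 < q := by rw [hq]; linarith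
  have hqp : q < p := by rw [hq]; linarith
  have hs0pos : ∀ s, s0 < s → 1 < s := fun s hs => lt_of_le_of_lt (le_max_right _ _) hs
  have hrp : ∀ s : ℝ, 0 < s → s ^ (-p) * s ^ p = 1 := fun s hs => by
    rw [← Real.rpow_add hs]; simp
  have hlow : ∀ s, s0 < s → s ^ p / 2 ≤ f s := by
    intro s hs
    have h1 := (hs0' s (le_of_lt (lt_of_le_of_lt (le_max_left _ _) hs))).1.2.1
    have hsp : 0 < s := by linarith [hs0pos s hs]
    have h2 := mul_lt_mul_of_pos_right h1 (Real.rpow_pos_of_pos hsp p)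
    have h3 := hrp s hsp
    have : s ^ (-p) * f s * s ^ p = f s := by rw [mul_right_comm, h3, one_mul]
    linarith
  have hup : ∀ s, s0 < s → f s ≤ 2 * s ^ p := by
    intro s hs
    have h1 := (hs0' s (le_of_lt (lt_of_le_of_lt (le_max_left _ _) hs))).1.2.2
    have hsp : 0 < s := by linarith [hs0pos s hs]
    have h2 := mul_lt_mul_of_pos_right h1 (Real.rpow_pos_of_pos hsp p)
    have h3 := hrp s hsp
    have : s ^ (-p) * f s * s ^ p = f s := by rw [mul_right_comm, h3, one_mul]
    linarith
  have hslope : ∀ s, s0 < s → q' * f s ≤ s * deriv f s := by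
    intro s hs
    have h1 := (hs0' s (le_of_lt (lt_of_le_of_lt (le_max_left _ _) hs))).1.1
    have hsp : 0 < s := by linarith [hs0pos s hs]
    have h2 : μ ^ p * ((μ * s) ^ (-p) * f (μ * s)) = s ^ (-p) * f (μ * s) := by
      rw [Real.mul_rpow hμ0.le hsp.le]
      have := hrp μ hμ0
      linear_combination (s ^ (-p) * f (μ * s)) * this
    rw [h2] at h1
    have h3 : 0 < s ^ (-p) := Real.rpow_pos_of_pos hsp _
    have h4 : 0 < s ^ (-p) * (f s - f (μ * s) - q' * (1 - μ) * f s) := by linarith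
    have h5 := pos_of_mul_pos_right h4 h3.le
    have hms : μ * s < s := by nlinarith
    have h6 := hconv.slope_le_of_hasDerivAt (show μ * s ∈ Ici 0 from (by positivity : 0 ≤ μ * s))
      (show s ∈ Ici 0 from hsp.le) hms (hd s hsp).hasDerivAt
    rw [slope_def_field, div_le_iff₀ (by linarith)] at h6
    have h7 : (1 - μ) * (q' * f s) ≤ (1 - μ) * (s * deriv f s) := by nlinarith
    exact le_of_mul_le_mul_left h7 (by linarith)
  obtain ⟨Mf, hMf⟩ := (isCompact_Icc.image_of_continuousOn
    (hf_C2.continuousOn.mono (Icc_subset_Ici_self : Icc 0 s0 ⊆ Ici 0))).bddAbove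
  refine ⟨q, fun s => f s + s ^ q, deriv f, fun s => deriv f s + q * s ^ (q - 1),
    fun s => deriv (deriv f) s + q * ((q - 1) * s ^ (q - 1 - 1)), s0, (q' - q) / 2, q * (q - 1),
    2 * C₀ + q + 3, |Mf| + 2, ?_⟩
  have hpow : ∀ s, s0 < s → ∀ e e' : ℝ, e ≤ e' → s ^ e ≤ s ^ e' := fun s hs e e' h =>
    Real.rpow_le_rpow_of_exponent_le (hs0pos s hs).le h
  constructor
  · exact hp
  · rw [hq]; linarith
  · exact hqp
  · exact le_max_right _ _
  · linarith
  · nlinarith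
  · linarith
  · positivity
  · exact hf_C2.continuousOn.add (Real.continuous_rpow_const (by linarith)).continuousOn
  · intro s hs
    have := Real.rpow_nonneg hs q
    linarith
  · intro s hs
    have hsp : 0 < s := by linarith [hs0pos s hs]
    have := Real.rpow_pos_of_pos hsp q
    have := hnn s hsp.le
    linarith
  · intro s hs s' hss
    have hsp : 0 < s := by linarith [hs0pos s hs]
    rcases eq_or_lt_of_le hss with h | h
    · subst h; simp
    · have := hconv.le_slope_of_hasDerivAt (show s ∈ Ici 0 from hsp.le)
        (show s' ∈ Ici 0 from by simp; linarith) h (hd s hsp).hasDerivAt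
      rwa [slope_def_field, le_div_iff₀ (by linarith)] at this
  · intro s hs
    have hsp : 0 < s := by linarith [hs0pos s hs]
    exact (hd s hsp).hasDerivAt.add (Real.hasDerivAt_rpow_const (Or.inl hsp.ne'))
  · intro s hs
    have hsp : 0 < s := by linarith [hs0pos s hs]
    exact (hdd s hsp).hasDerivAt.add ((Real.hasDerivAt_rpow_const (Or.inl hsp.ne')).const_mul q)
  · intro s hs
    have hsp : 0 < s := by linarith [hs0pos s hs]
    have e1 : s ^ q = s * s ^ (q - 1) := by
      rw [← Real.rpow_one_add' hsp.le (by linarith)]; congr 1; ring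
    have e2 : s ^ (p + q - 1) = s ^ p * s ^ (q - 1) := by
      rw [← Real.rpow_add hsp]; congr 1; ring
    have h1 := hslope s hs
    have h2 := hlow s hs
    have h3 : 0 < s ^ (q - 1) := Real.rpow_pos_of_pos hsp _
    rw [e2]
    have e3 : deriv f s * (f s + s ^ q) - (deriv f s + q * s ^ (q - 1)) * f s
      = s ^ (q - 1) * (s * deriv f s - q * f s) := by rw [e1]; ring
    rw [e3]
    have h4 : (q' - q) / 2 * s ^ p ≤ s * deriv f s - q * f s := by nlinarith
    nlinarith [mul_le_mul_of_nonneg_left h4 h3.le]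
  · intro s hs
    have hsp : 0 < s := by linarith [hs0pos s hs]
    have := hdd0 s hsp
    have e : q - 1 - 1 = q - 2 := by ring
    rw [e]
    nlinarith
  · intro s hs
    have hsp : 0 < s := by linarith [hs0pos s hs]
    have h1 := hder s hsp.le
    have h2 : s ^ (q - 1) ≤ s ^ (p - 1) := hpow s hs _ _ (by linarith)
    have h3 : (1:ℝ) ≤ s ^ (p - 1) := by
      have := hpow s hs 0 (p - 1) (by linarith)
      simpa using this
    have h4 : 0 < s ^ (q - 1) := Real.rpow_pos_of_pos hsp _
    calc |deriv f s + q * s ^ (q - 1)| ≤ |deriv f s| + |q * s ^ (q - 1)| := abs_add_le _ _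
      _ = |deriv f s| + q * s ^ (q - 1) := by rw [abs_of_pos (by positivity : 0 < q * s ^ (q - 1))]
      _ ≤ _ := by nlinarith
  · intro s hs
    have hsp : 0 < s := by linarith [hs0pos s hs]
    have h1 := hup s hs
    have h2 : s ^ q ≤ s ^ p := hpow s hs _ _ hqp.le
    have h3 : 0 < s ^ p := Real.rpow_pos_of_pos hsp _
    nlinarith
  · exact hlow
  · intro s hs
    have h3 : 0 ≤ s ^ p := Real.rpow_nonneg hs _
    rcases le_or_gt s s0 with h | h
    · have : f s ≤ Mf := hMf ⟨s, ⟨hs, h⟩, rfl⟩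
      have := le_abs_self Mf
      nlinarith [abs_nonneg Mf]
    · have := hup s h
      nlinarith [abs_nonneg Mf]


lemma exists_split {X : Type*} [TopologicalSpace X] [T2Space X] {Z Fr : Set X} (hZ : IsCompact Z)
    (hF : IsClosed Fr) {x : X} (hx : x ∈ Z) (h : connectedComponentIn Z x ∩ Fr = ∅) :
    ∃ Z1 Z2 : Set X, IsCompact Z1 ∧ IsCompact Z2 ∧ x ∈ Z1 ∧ Z1 ∪ Z2 = Z ∧ Disjoint Z1 Z2 ∧
      Disjoint Z1 Fr := by
  have : CompactSpace Z := isCompact_iff_compactSpace.1 hZ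
  rw [connectedComponentIn_eq_image hx, connectedComponent_eq_iInter_isClopen] at h
  have hFc : IsClosed ((↑) ⁻¹' Fr : Set Z) := hF.preimage continuous_subtype_val
  have : Nonempty { s : Set Z // IsClopen s ∧ (⟨x, hx⟩ : Z) ∈ s } := ⟨⟨univ, isClopen_univ, mem_univ _⟩⟩
  obtain ⟨⟨s, hs, hxs⟩, hsF⟩ := hFc.isCompact.elim_directed_family_closed
    (fun s : { s : Set Z // IsClopen s ∧ (⟨x, hx⟩ : Z) ∈ s } => (s : Set Z))
    (fun s => s.2.1.1) (by
      rw [eq_empty_iff_forall_notMem]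
      rintro y ⟨hy1, hy2⟩
      have : (y : X) ∈ (∅ : Set X) := by
        rw [← h]; exact ⟨⟨y, hy2, rfl⟩, hy1⟩
      exact this) (by
      rintro ⟨a, ha, hxa⟩ ⟨b, hb, hxb⟩
      exact ⟨⟨a ∩ b, ha.inter hb, hxa, hxb⟩, inter_subset_left, inter_subset_right⟩)
  refine ⟨(↑) '' s, (↑) '' sᶜ, hs.1.isCompact.image continuous_subtype_val,
    hs.compl.1.isCompact.image continuous_subtype_val, ⟨_, hxs, rfl⟩, ?_, ?_, ?_⟩
  · rw [← image_union, union_compl_self, image_univ, Subtype.range_coe]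
  · exact (disjoint_image_iff Subtype.val_injective).2 disjoint_compl_right
  · rw [Set.disjoint_left]
    rintro _ ⟨y, hy, rfl⟩ hyF
    have : y ∈ (∅ : Set Z) := by rw [← hsF]; exact ⟨hyF, hy⟩
    exact this

structure Cut {n : ℕ} (Ω : Set (EuclideanSpace ℝ (Fin n))) (V : EuclideanSpace ℝ (Fin n) → ℝ)
    (x0 : EuclideanSpace ℝ (Fin n)) (S : Set (EuclideanSpace ℝ (Fin n)))
    (χ : EuclideanSpace ℝ (Fin n) → ℝ) (c Ca : ℝ) : Prop where
  cpt : IsCompact S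
  sub : S ⊆ Ω
  smooth : ContDiff ℝ 2 χ
  rng : ∀ x, χ x ∈ Icc 0 1
  nhd : ∀ x, χ x ≠ 0 → S ∈ nhds x
  one : ∀ᶠ x in nhds x0, χ x = 1
  hc : 0 < c
  hCa : 0 < Ca
  alt : ∀ x ∈ S, (∀ᶠ y in nhds x, χ y = 1) ∨ c ≤ V x
  ba : ∀ x ∈ S, ∀ i, |fderiv ℝ χ x (EuclideanSpace.single i (1:ℝ))| ≤ Ca
  bb : ∀ x ∈ S, ∀ i, |fderiv ℝ (fun y => fderiv ℝ χ y (EuclideanSpace.single i (1:ℝ))) x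
    (EuclideanSpace.single i (1:ℝ))| ≤ Ca

open scoped Manifold ContDiff in
lemma exists_cut {n : ℕ} {Ω : Set (EuclideanSpace ℝ (Fin n))} {V : EuclideanSpace ℝ (Fin n) → ℝ}
    (hΩ : IsOpen Ω) (hb : Bornology.IsBounded Ω) (hV : ContinuousOn V (closure Ω))
    (hV0 : ∀ x ∈ closure Ω, 0 ≤ V x) {x0 : EuclideanSpace ℝ (Fin n)} (hx : x0 ∈ Ω) (hVx : V x0 = 0)
    (hcomp : connectedComponentIn {x ∈ closure Ω | V x = 0} x0 ∩ frontier Ω = ∅) :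
    ∃ S χ c Ca, Cut Ω V x0 S χ c Ca := by
  have hcl : IsCompact (closure Ω) := hb.isCompact_closure
  have hZ : IsCompact {x ∈ closure Ω | V x = 0} := by
    have : IsClosed (closure Ω ∩ V ⁻¹' {0}) :=
      hV.preimage_isClosed_of_isClosed isClosed_closure isClosed_singleton
    exact hcl.of_isClosed_subset this (fun x hx => hx.1)
  obtain ⟨Z1, Z2, h1, h2, hx1, hu, hd, hdF⟩ := exists_split hZ isClosed_frontier
    (x := x0) ⟨subset_closure hx, hVx⟩ hcomp
  have hZ1 : Z1 ⊆ Ω := by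
    intro x hx
    have h3 : x ∈ closure Ω := by
      have : x ∈ {x ∈ closure Ω | V x = 0} := hu ▸ Or.inl hx
      exact this.1
    by_contra h4
    exact Set.disjoint_left.1 hdF hx (by rw [hΩ.frontier_eq]; exact ⟨h3, h4⟩)
  have hdis : Disjoint (Ωᶜ ∪ Z2) Z1 := by
    rw [Set.disjoint_left]
    rintro x (h | h) h'
    · exact h (hZ1 h')
    · exact Set.disjoint_left.1 hd h' h
  obtain ⟨χ, hχ0, hχ1, hχ⟩ := exists_contMDiffMap_zero_one_nhds_of_isClosed
    (𝓘(ℝ, EuclideanSpace ℝ (Fin n))) (n := 2) (hΩ.isClosed_compl.union h2.isClosed) h1.isClosed hdis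
  have hsm : ContDiff ℝ 2 (χ : EuclideanSpace ℝ (Fin n) → ℝ) := χ.contMDiff.contDiff
  have hS0 : ∀ x ∈ tsupport χ, x ∉ Ωᶜ ∪ Z2 := by
    intro x hx hx'
    have := hχ0.filter_mono (nhds_le_nhdsSet hx')
    exact (notMem_tsupport_iff_eventuallyEq.2 this) hx
  have hSΩ : tsupport χ ⊆ Ω := by
    intro x hx
    by_contra h
    exact hS0 x hx (Or.inl h)
  have hScpt : IsCompact (tsupport χ) :=
    hcl.of_isClosed_subset (isClosed_tsupport _) (hSΩ.trans subset_closure)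
  have hc : ∃ c > 0, ∀ x ∈ tsupport χ, (∀ᶠ y in nhds x, χ y = 1) ∨ c ≤ V x := by
    have hop : IsOpen {x | ∀ᶠ y in nhds x, χ y = 1} := isOpen_setOfPred_eventually_nhds
    have hK := hScpt.diff hop
    rcases (tsupport χ \ {x | ∀ᶠ y in nhds x, χ y = 1}).eq_empty_or_nonempty with he | hne
    · refine ⟨1, one_pos, fun x hx => Or.inl ?_⟩
      by_contra h
      have : x ∈ (∅ : Set _) := he ▸ ⟨hx, h⟩
      exact this
    · obtain ⟨m, hm, hmin⟩ := hK.exists_isMinOn hne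
        (hV.mono (sdiff_subset.trans (hSΩ.trans subset_closure)))
      refine ⟨V m, ?_, ?_⟩
      · have hmc := subset_closure (hSΩ hm.1)
        refine lt_of_le_of_ne (hV0 m hmc) fun h => ?_
        have : m ∈ Z1 ∪ Z2 := by rw [hu]; exact ⟨hmc, h.symm⟩
        rcases this with h | h
        · exact hm.2 (hχ1.filter_mono (nhds_le_nhdsSet h))
        · exact hS0 m hm.1 (Or.inr h)
      · intro x hx
        by_cases h : ∀ᶠ y in nhds x, χ y = 1
        · exact Or.inl h
        · exact Or.inr (hmin ⟨hx, h⟩)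
  obtain ⟨c, hc, halt⟩ := hc
  have hbd : ∀ g : Fin n → EuclideanSpace ℝ (Fin n) → ℝ, (∀ i, Continuous (g i)) →
      ∃ C > 0, ∀ x ∈ tsupport χ, ∀ i, |g i x| ≤ C := by
    intro g hg
    have hgc : Continuous (fun x => ∑ i, |g i x|) := by
      exact continuous_finsetSum _ fun i _ => (hg i).abs
    obtain ⟨C, hC⟩ := (hScpt.bddAbove_image hgc.continuousOn)
    refine ⟨|C| + 1, by positivity, fun x hx i => ?_⟩
    have h3 : ∑ i, |g i x| ≤ C := hC ⟨x, hx, rfl⟩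
    have h4 := Finset.single_le_sum (f := fun i => |g i x|) (fun i _ => abs_nonneg _) (Finset.mem_univ i)
    linarith [le_abs_self C]
  obtain ⟨C1, hC1, hb1⟩ := hbd (fun i x => fderiv ℝ χ x (EuclideanSpace.single i (1:ℝ)))
    (fun i => continuous_iff_continuousAt.2 fun x => (continuousAt_dd hsm.contDiffAt _).1)
  obtain ⟨C2, hC2, hb2⟩ := hbd (fun i x => fderiv ℝ (fun y => fderiv ℝ χ y (EuclideanSpace.single i (1:ℝ))) x
    (EuclideanSpace.single i (1:ℝ)))
    (fun i => continuous_iff_continuousAt.2 fun x => (continuousAt_dd hsm.contDiffAt _).2)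
  refine ⟨tsupport χ, χ, c, max C1 C2, hScpt, hSΩ, hsm, hχ, ?_,
    hχ1.filter_mono (nhds_le_nhdsSet hx1), hc, lt_max_of_lt_left hC1, halt, ?_, ?_⟩
  · intro x hx
    have := (χ.contMDiff.continuous.continuousAt (x := x)).eventually_ne hx
    filter_upwards [this] with y hy
    exact subset_tsupport _ hy
  · exact fun x hx i => (hb1 x hx i).trans (le_max_left _ _)
  · exact fun x hx i => (hb2 x hx i).trans (le_max_right _ _)


lemma quad_low {P w g G Y : ℝ} (hw : 0 < w) (hP : w ≤ P) (hg : |g| ≤ G) :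
    -(G ^ 2 / w) ≤ P * Y ^ 2 + 2 * (g * Y) := by
  have h1 : g ^ 2 ≤ G ^ 2 := sq_le_sq' (by linarith [neg_abs_le g]) (le_of_abs_le hg)
  have h2 : g ^ 2 / w ≤ G ^ 2 / w := by gcongr
  have h3 : 0 ≤ (w * Y + g) ^ 2 / w := by positivity
  have h4 : (w * Y + g) ^ 2 / w = w * Y ^ 2 + 2 * (g * Y) + g ^ 2 / w := by field_simp; ring
  nlinarith [mul_nonneg (sub_nonneg.2 hP) (sq_nonneg Y)]

lemma key_alg {p q : ℝ} {f F f1 F1 F2 : ℝ → ℝ} {s0 c1 c2 C3 C7 : ℝ}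
    (hF : FData p q f F f1 F1 F2 s0 c1 c2 C3 C7) {c Ca : ℝ} (hc : 0 < c) (hCa : 0 < Ca) (n : ℕ) :
    ∃ m : ℕ, ∃ B > 0, ∀ s ≥ 0, ∀ χ : ℝ, 0 < χ → χ ≤ 1 → B ≤ χ ^ (m + 2) * F s →
      s0 < s ∧ ∀ (v : ℝ) (χ1 χ2 y : Fin n → ℝ), 0 ≤ v → (∀ i, |χ1 i| ≤ Ca) → (∀ i, |χ2 i| ≤ Ca) →
        ((∀ i, χ1 i = 0 ∧ χ2 i = 0) ∨ c ≤ v) →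
        0 < v * χ ^ (m + 2) * (f1 s * F s - F1 s * f s) + χ ^ (m + 2) * F s
          + ∑ i, ((((m + 2 : ℝ) * ((m + 1) * χ ^ m)) * χ1 i ^ 2 + (m + 2) * χ ^ (m + 1) * χ2 i) * F s
            + 2 * (((m + 2) * χ ^ (m + 1) * χ1 i) * (F1 s * y i)) + χ ^ (m + 2) * (F2 s * y i ^ 2)) := by
  obtain ⟨hp, hq1, hq2, hs0, hc1, hc2, hC3, hC7, Fcont, fF, Fpos, tangent, dF, dF1, low1, low2, up1,
    up0, low, upf⟩ := hF
  set θ := 2 * q - p - 1 with hθ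
  have hθ0 : 0 < θ := by linarith
  obtain ⟨m, hm⟩ := exists_nat_ge (2 * p / θ)
  set K1 : ℝ := (m + 2) * Ca * C3 + ((m + 2) * Ca * C3) ^ 2 / c2 with hK1
  have hK1p : 0 < K1 := by positivity
  set C6 : ℝ := n * K1 / (c * c1) with hC6
  have hC6p : 0 ≤ C6 := by positivity
  obtain ⟨K, hK⟩ := (isCompact_Icc (a := (0:ℝ)) (b := s0)).bddAbove_image (Fcont.mono Icc_subset_Ici_self)
  set B := max (K + 1) (C3 * C6 ^ (p / θ) + 1) with hB
  have hBp : 0 < B := lt_max_of_lt_right (by positivity)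
  refine ⟨m, B, hBp, ?_⟩
  intro s hs χ hχ0 hχ1 hBs
  have hFs : 0 < F s := by
    have : 0 < χ ^ (m + 2) * F s := hBp.trans_le hBs
    exact (pos_iff_pos_of_mul_pos this).1 (by positivity)
  have hχM : χ ^ (m + 2) ≤ 1 := pow_le_one₀ hχ0.le hχ1
  have hBF : B ≤ F s := hBs.trans (by nlinarith)
  have hss : s0 < s := by
    by_contra h
    push Not at h
    have : F s ≤ K := hK ⟨s, ⟨hs, h⟩, rfl⟩
    linarith [le_max_left (K + 1) (C3 * C6 ^ (p / θ) + 1)]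
  have hs1 : 1 < s := by linarith
  have hsp : 0 < s := by linarith
  refine ⟨hss, ?_⟩
  have hG : C6 ≤ χ ^ 2 * s ^ θ := by
    by_contra h
    push Not at h
    have h1 : (χ ^ 2 * s ^ θ) ^ (p / θ) ≤ C6 ^ (p / θ) :=
      Real.rpow_le_rpow (by positivity) h.le (by positivity)
    have h2 : (χ ^ 2 * s ^ θ) ^ (p / θ) = χ ^ (2 * p / θ) * s ^ p := by
      rw [Real.mul_rpow (by positivity) (by positivity), ← Real.rpow_natCast, ← Real.rpow_mul hχ0.le,
        ← Real.rpow_mul hsp.le]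
      congr 2
      · push_cast; ring
      · field_simp
    have h3 : χ ^ (m + 2) ≤ χ ^ (2 * p / θ) := by
      rw [← Real.rpow_natCast]
      exact Real.rpow_le_rpow_of_exponent_ge hχ0 hχ1 (by push_cast; linarith)
    have h4 : B ≤ C3 * (χ ^ (m + 2) * s ^ p) :=
      calc B ≤ χ ^ (m + 2) * F s := hBs
        _ ≤ χ ^ (m + 2) * (C3 * s ^ p) := by gcongr; exact up0 s hss
        _ = _ := by ring
    have h5 : χ ^ (m + 2) * s ^ p ≤ C6 ^ (p / θ) := by
      rw [h2] at h1
      refine le_trans ?_ h1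
      gcongr
    have h6 := le_max_right (K + 1) (C3 * C6 ^ (p / θ) + 1)
    nlinarith
  intro v χ1 χ2 y hv h1 h2 halt
  have hw : 0 < c2 * s ^ (q - 2) := by positivity
  have hF2 := low2 s hss
  have hlow1 := low1 s hss
  have hpq : 0 < s ^ (p + q - 1) := by positivity
  have hχF : 0 < χ ^ (m + 2) * F s := by positivity
  have hA : 0 ≤ f1 s * F s - F1 s * f s := le_trans (by positivity) hlow1
  rcases halt with h0 | hcv
  · have hsum : 0 ≤ ∑ i, ((((m + 2 : ℝ) * ((m + 1) * χ ^ m)) * χ1 i ^ 2 + (m + 2) * χ ^ (m + 1) * χ2 i) * F s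
            + 2 * (((m + 2) * χ ^ (m + 1) * χ1 i) * (F1 s * y i)) + χ ^ (m + 2) * (F2 s * y i ^ 2)) := by
      apply Finset.sum_nonneg
      intro i _
      rw [(h0 i).1, (h0 i).2]
      have : 0 ≤ F2 s := hw.le.trans hF2
      have : 0 ≤ χ ^ (m + 2) * (F2 s * y i ^ 2) := by positivity
      simpa using this
    have : 0 ≤ v * χ ^ (m + 2) * (f1 s * F s - F1 s * f s) := by positivity
    linarith
  · have hterm : ∀ i, -(K1 * χ ^ m * s ^ (2 * p - q)) ≤
        (((m + 2 : ℝ) * ((m + 1) * χ ^ m)) * χ1 i ^ 2 + (m + 2) * χ ^ (m + 1) * χ2 i) * F s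
            + 2 * (((m + 2) * χ ^ (m + 1) * χ1 i) * (F1 s * y i)) + χ ^ (m + 2) * (F2 s * y i ^ 2) := by
      intro i
      have e1 : -((m + 2) * Ca * C3 * χ ^ m * s ^ (2 * p - q)) ≤ (m + 2) * χ ^ (m + 1) * χ2 i * F s := by
        have a1 : F s ≤ C3 * s ^ (2 * p - q) := (up0 s hss).trans (by
          gcongr 2
          · exact hs1.le
          · linarith)
        have a2 : χ ^ (m + 1) ≤ χ ^ m := pow_le_pow_of_le_one hχ0.le hχ1 (by omega)
        have a3 : |(m + 2) * χ ^ (m + 1) * χ2 i * F s| ≤ (m + 2) * χ ^ m * Ca * (C3 * s ^ (2 * p - q)) := by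
          rw [abs_mul, abs_mul, abs_of_pos hFs, abs_of_pos (show (0:ℝ) < (m + 2) * χ ^ (m + 1) by positivity)]
          gcongr
          exact h2 i
        have a4 := (abs_le.1 a3).1
        calc _ = -((m + 2) * χ ^ m * Ca * (C3 * s ^ (2 * p - q))) := by ring
          _ ≤ _ := a4
      have e2 : 0 ≤ ((m + 2 : ℝ) * ((m + 1) * χ ^ m)) * χ1 i ^ 2 * F s := by positivity
      have e3 : -(((m + 2) * Ca * C3 * s ^ (p - 1)) ^ 2 / (c2 * s ^ (q - 2))) ≤
          F2 s * (χ * y i) ^ 2 + 2 * (((m + 2) * χ1 i * F1 s) * (χ * y i)) := by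
        apply quad_low hw hF2
        rw [abs_mul, abs_mul, abs_of_pos (show (0:ℝ) < m + 2 by positivity)]
        calc (m + 2 : ℝ) * |χ1 i| * |F1 s| ≤ (m + 2) * Ca * (C3 * s ^ (p - 1)) := by
              gcongr
              · exact h1 i
              · exact up1 s hss
          _ = _ := by ring
      have e4 : ((m + 2) * Ca * C3 * s ^ (p - 1)) ^ 2 / (c2 * s ^ (q - 2)) =
          ((m + 2) * Ca * C3) ^ 2 / c2 * s ^ (2 * p - q) := by
        have : s ^ (2 * p - q) = (s ^ (p - 1)) ^ 2 / s ^ (q - 2) := by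
          rw [← Real.rpow_natCast, ← Real.rpow_mul hsp.le, ← Real.rpow_sub hsp]
          congr 1; push_cast; ring
        rw [this]
        field_simp
      rw [e4] at e3
      have e5 := mul_le_mul_of_nonneg_left e3 (show 0 ≤ χ ^ m by positivity)
      have e6 : (((m + 2 : ℝ) * ((m + 1) * χ ^ m)) * χ1 i ^ 2 + (m + 2) * χ ^ (m + 1) * χ2 i) * F s
            + 2 * (((m + 2) * χ ^ (m + 1) * χ1 i) * (F1 s * y i)) + χ ^ (m + 2) * (F2 s * y i ^ 2)
          = ((m + 2 : ℝ) * ((m + 1) * χ ^ m)) * χ1 i ^ 2 * F s + (m + 2) * χ ^ (m + 1) * χ2 i * F s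
            + χ ^ m * (F2 s * (χ * y i) ^ 2 + 2 * (((m + 2) * χ1 i * F1 s) * (χ * y i))) := by ring
      rw [e6]
      have e7 : -(K1 * χ ^ m * s ^ (2 * p - q)) = -((m + 2) * Ca * C3 * χ ^ m * s ^ (2 * p - q)) +
        χ ^ m * -(((m + 2) * Ca * C3) ^ 2 / c2 * s ^ (2 * p - q)) := by rw [hK1]; ring
      rw [e7]
      linarith
    have hsum := Finset.sum_le_sum (fun i (_ : i ∈ Finset.univ) => hterm i)
    rw [Finset.sum_const, Finset.card_univ, Fintype.card_fin, nsmul_eq_mul] at hsum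
    have hmain : n * (K1 * χ ^ m * s ^ (2 * p - q)) ≤ v * χ ^ (m + 2) * (f1 s * F s - F1 s * f s) := by
      have b1 : s ^ (p + q - 1) = s ^ (2 * p - q) * s ^ θ := by
        rw [← Real.rpow_add hsp]; congr 1; rw [hθ]; ring
      have b2 : n * K1 = C6 * (c * c1) := by rw [hC6]; field_simp
      calc n * (K1 * χ ^ m * s ^ (2 * p - q)) = C6 * (c * c1 * χ ^ m * s ^ (2 * p - q)) := by
            rw [← mul_assoc, ← mul_assoc, b2]; ring
        _ ≤ (χ ^ 2 * s ^ θ) * (c * c1 * χ ^ m * s ^ (2 * p - q)) := by gcongr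
        _ = c * χ ^ (m + 2) * (c1 * s ^ (p + q - 1)) := by rw [b1]; ring
        _ ≤ v * χ ^ (m + 2) * (f1 s * F s - F1 s * f s) := by gcongr
    linarith


section
variable {n : ℕ}

lemma D2.vals {φ : ℝ → ℝ} {a b a' b' : ℝ} (h : D2 φ a b) (ha : a = a') (hb : b = b') : D2 φ a' b' := by
  subst ha hb; exact h

lemma flat_zero {χ : EuclideanSpace ℝ (Fin n) → ℝ} {x : EuclideanSpace ℝ (Fin n)}
    (h : ∀ᶠ y in nhds x, χ y = 1) (e : EuclideanSpace ℝ (Fin n)) :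
    fderiv ℝ χ x e = 0 ∧ fderiv ℝ (fun y => fderiv ℝ χ y e) x e = 0 := by
  have h0 : ∀ᶠ y in nhds x, fderiv ℝ χ y e = 0 := by
    filter_upwards [h.eventually_nhds] with y hy
    have : χ =ᶠ[nhds y] fun _ => (1:ℝ) := hy
    rw [this.fderiv_eq]; simp
  refine ⟨h0.self_of_nhds, ?_⟩
  have : (fun y => fderiv ℝ χ y e) =ᶠ[nhds x] fun _ => (0:ℝ) := h0
  rw [this.fderiv_eq]; simp

lemma Sol.Jtouch {Ω : Set (EuclideanSpace ℝ (Fin n))} {T : ℝ}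
    {V : EuclideanSpace ℝ (Fin n) → ℝ} {f : ℝ → ℝ} {u : ℝ → EuclideanSpace ℝ (Fin n) → ℝ}
    (hu : Sol Ω T V f u) {p q : ℝ} {F f1 F1 F2 : ℝ → ℝ} {s0 c1 c2 C3 C7 : ℝ}
    (hF : FData p q f F f1 F1 F2 s0 c1 c2 C3 C7)
    {x0 : EuclideanSpace ℝ (Fin n)} {S : Set (EuclideanSpace ℝ (Fin n))}
    {χ : EuclideanSpace ℝ (Fin n) → ℝ} {c Ca : ℝ} (hcut : Cut Ω V x0 S χ c Ca)
    {m : ℕ} {τ ε t0 t : ℝ} (hτ : 0 < τ) (hε : 0 < ε) (ht0 : 0 < t0) (ht : t0 < t) (htT : t < T - τ)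
    {x : EuclideanSpace ℝ (Fin n)} (hx : x ∈ S) (hχ : 0 < χ x) (hs : s0 < u t x)
    (key : ∀ (v : ℝ) (χ1 χ2 y : Fin n → ℝ), 0 ≤ v → (∀ i, |χ1 i| ≤ Ca) → (∀ i, |χ2 i| ≤ Ca) →
        ((∀ i, χ1 i = 0 ∧ χ2 i = 0) ∨ c ≤ v) →
        0 < v * χ x ^ (m + 2) * (f1 (u t x) * F (u t x) - F1 (u t x) * f (u t x)) + χ x ^ (m + 2) * F (u t x)
          + ∑ i, ((((m + 2 : ℝ) * ((m + 1) * χ x ^ m)) * χ1 i ^ 2 + (m + 2) * χ x ^ (m + 1) * χ2 i) * F (u t x)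
            + 2 * (((m + 2) * χ x ^ (m + 1) * χ1 i) * (F1 (u t x) * y i)) + χ x ^ (m + 2) * (F2 (u t x) * y i ^ 2)))
    {z : ℝ → EuclideanSpace ℝ (Fin n) → ℝ}
    (hz : z = fun t x => (u (t + τ) x - u t x) / τ - ε * Real.exp (-(t - t0)) * (χ x ^ (m + 2) * F (u t x)))
    (h0 : z t x = 0) (hxz : ∀ y ∈ S, 0 ≤ z t y) (hsz : ∀ s ∈ Ico t0 t, 0 ≤ z s x) : False := by
  have hxΩ := hcut.sub hx
  have m1 : t ∈ Ioo 0 T := ⟨by linarith, by linarith⟩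
  have m2 : t + τ ∈ Ioo 0 T := ⟨by linarith, by linarith⟩
  obtain ⟨d, a, b, hpd, hd⟩ := hu.pd t m1 x hxΩ
  obtain ⟨d', a', b', hpd', hd'⟩ := hu.pd (t + τ) m2 x hxΩ
  set χ1 : Fin n → ℝ := fun i => fderiv ℝ χ x (EuclideanSpace.single i (1:ℝ)) with hχ1
  set χ2 : Fin n → ℝ := fun i => fderiv ℝ (fun y => fderiv ℝ χ y (EuclideanSpace.single i (1:ℝ))) x
    (EuclideanSpace.single i (1:ℝ)) with hχ2
  have hkey := key (V x) χ1 χ2 a (hu.Vnonneg x hxΩ) (hcut.ba x hx) (hcut.bb x hx) (by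
    rcases hcut.alt x hx with h | h
    · exact Or.inl fun i => flat_zero h _
    · exact Or.inr h)
  set s := u t x with hsdef
  set E := ε * Real.exp (-(t - t0)) with hE
  have hEp : 0 < E := by positivity
  have hpdz : PD z t x ((d' - d) / τ - (-E * (χ x ^ (m + 2) * F s) + E * (χ x ^ (m + 2) * (F1 s * d))))
      (fun i => (a' i - a i) / τ - E * ((m + 2) * χ x ^ (m + 1) * χ1 i * F s + χ x ^ (m + 2) * (F1 s * a i)))
      (fun i => (b' i - b i) / τ - E * ((((m + 2 : ℝ) * ((m + 1) * χ x ^ m)) * χ1 i ^ 2 + (m + 2) * χ x ^ (m + 1) * χ2 i) * F s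
            + 2 * (((m + 2) * χ x ^ (m + 1) * χ1 i) * (F1 s * a i)) + χ x ^ (m + 2) * (F2 s * a i ^ 2 + F1 s * b i))) := by
    constructor
    · have e1 : HasDerivAt (fun s => u (s + τ) x) d' t := by
        exact HasDerivAt.comp_add_const t τ hpd'.1
      have e2 : HasDerivAt (fun r => F (u r x)) (F1 s * d) t := (hF.dF s hs).comp t hpd.1
      have e3 : HasDerivAt (fun r => ε * Real.exp (-(r - t0))) (-E) t := by
        have := ((((hasDerivAt_id t).sub_const t0).neg).exp).const_mul ε
        exact this.congr_deriv (by simp [hE])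
      have e4 := ((e1.sub hpd.1).div_const τ).sub (e3.mul (e2.const_mul (χ x ^ (m + 2))))
      rw [hz]
      exact e4
    · intro i
      have e1 := D2.of_contDiffAt (hcut.smooth.contDiffAt (x := x)) (EuclideanSpace.single i (1:ℝ))
      have e2 : D2 (fun r => χ (x + r • EuclideanSpace.single i (1:ℝ)) ^ (m + 2))
          ((m + 2) * χ x ^ (m + 1) * χ1 i)
          ((m + 2) * ((m + 1) * χ x ^ m) * χ1 i ^ 2 + (m + 2) * χ x ^ (m + 1) * χ2 i) := by
        refine e1.comp (F := fun r => r ^ (m + 2)) (F1 := fun r => ((m:ℝ) + 2) * r ^ (m + 1)) (y := χ x)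
          (by simp) (Eventually.of_forall fun r => ?_) ?_
        · exact (hasDerivAt_pow (m + 2) r).congr_deriv (by push_cast; simp)
        · exact ((hasDerivAt_pow (m + 1) (χ x)).const_mul ((m:ℝ) + 2)).congr_deriv (by push_cast; simp)
      have e3 : D2 (fun r => F (u t (x + r • EuclideanSpace.single i (1:ℝ)))) (F1 s * a i)
          (F2 s * a i ^ 2 + F1 s * b i) := by
        refine (hpd.2 i).comp (F := F) (F1 := F1) (y := s) (by simp [hsdef]) ?_ (hF.dF1 s hs)
        filter_upwards [eventually_gt_nhds hs] with r hr using hF.dF r hr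
      have e4 := (((hpd'.2 i).sub (hpd.2 i)).const_mul τ⁻¹).sub ((e2.mul e3).const_mul E)
      rw [hz]
      refine (e4.congr fun r => ?_).vals ?_ ?_
      · simp only [hE]; ring
      · simp only [zero_smul, add_zero, ← hsdef]; ring
      · simp only [zero_smul, add_zero, ← hsdef]; ring
  obtain ⟨h1, h2⟩ := hpdz.touch ht (hcut.nhd x hχ.ne') h0 hxz hsz
  have hD : (u (t + τ) x - s) / τ = E * (χ x ^ (m + 2) * F s) := by
    rw [hz] at h0; simp only at h0; linarith
  have hmon : s ≤ u (t + τ) x := hu.mono x hxΩ m1 m2 (by linarith)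
  have htan := hF.tangent s hs _ hmon
  have hV := hu.Vnonneg x hxΩ
  have h3 : V x * f1 s * (E * (χ x ^ (m + 2) * F s)) ≤ (V x * f (u (t + τ) x) - V x * f s) / τ := by
    rw [← hD, ← mul_div_assoc]
    apply div_le_div_of_nonneg_right _ hτ.le
    calc V x * f1 s * (u (t + τ) x - s) = V x * (f1 s * (u (t + τ) x - s)) := by ring
      _ ≤ V x * (f (u (t + τ) x) - f s) := by gcongr
      _ = _ := by ring
  rw [Finset.sum_sub_distrib, ← Finset.sum_div, ← Finset.mul_sum, Finset.sum_sub_distrib] at h2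
  have h4 : ∑ i, ((((m + 2 : ℝ) * ((m + 1) * χ x ^ m)) * χ1 i ^ 2 + (m + 2) * χ x ^ (m + 1) * χ2 i) * F s
            + 2 * (((m + 2) * χ x ^ (m + 1) * χ1 i) * (F1 s * a i)) + χ x ^ (m + 2) * (F2 s * a i ^ 2 + F1 s * b i))
      = ∑ i, ((((m + 2 : ℝ) * ((m + 1) * χ x ^ m)) * χ1 i ^ 2 + (m + 2) * χ x ^ (m + 1) * χ2 i) * F s
            + 2 * (((m + 2) * χ x ^ (m + 1) * χ1 i) * (F1 s * a i)) + χ x ^ (m + 2) * (F2 s * a i ^ 2))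
        + χ x ^ (m + 2) * F1 s * ∑ i, b i := by
    rw [Finset.mul_sum, ← Finset.sum_add_distrib]
    apply Finset.sum_congr rfl
    intro i _
    ring
  rw [h4] at h2
  set Q := ∑ i, ((((m + 2 : ℝ) * ((m + 1) * χ x ^ m)) * χ1 i ^ 2 + (m + 2) * χ x ^ (m + 1) * χ2 i) * F s
            + 2 * (((m + 2) * χ x ^ (m + 1) * χ1 i) * (F1 s * a i)) + χ x ^ (m + 2) * (F2 s * a i ^ 2))
  have h5 : (d' - d) / τ = (∑ i, b' i - ∑ i, b i) / τ + (V x * f (u (t + τ) x) - V x * f s) / τ := by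
    rw [← add_div, hd, hd']; congr 1; ring
  have h6 := mul_pos hEp hkey
  rw [h5] at h1
  have hdb : d = ∑ i, b i + V x * f s := hd
  rw [hdb] at h1
  nlinarith

lemma Sol.Jbound {Ω : Set (EuclideanSpace ℝ (Fin n))} {T : ℝ}
    {V : EuclideanSpace ℝ (Fin n) → ℝ} {f : ℝ → ℝ} {u : ℝ → EuclideanSpace ℝ (Fin n) → ℝ}
    (hu : Sol Ω T V f u) {p q : ℝ} {F f1 F1 F2 : ℝ → ℝ} {s0 c1 c2 C3 C7 : ℝ}
    (hF : FData p q f F f1 F1 F2 s0 c1 c2 C3 C7) (hf0 : ∀ s ≥ 0, 0 ≤ f s)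
    {x0 : EuclideanSpace ℝ (Fin n)} {S : Set (EuclideanSpace ℝ (Fin n))}
    {χ : EuclideanSpace ℝ (Fin n) → ℝ} {c Ca : ℝ} (hcut : Cut Ω V x0 S χ c Ca)
    {t0 δ κ : ℝ} (ht0 : t0 ∈ Ioo 0 T) (hδ : 0 < δ) (hκ : 0 < κ)
    (hD : ∀ τ ∈ Ioo 0 κ, ∀ t ∈ Ico t0 (T - τ), ∀ x ∈ S, δ ≤ (u (t + τ) x - u t x) / τ) :
    ∃ ε > 0, ∀ x, χ x = 1 → ∀ t ∈ Ico t0 T, ∀ d, HasDerivAt (fun s => u s x) d t →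
      ε * f (u t x) ≤ d := by
  obtain ⟨m, B, hB, hkey⟩ := key_alg hF hcut.hc hcut.hCa n
  have hFu : ContinuousOn (fun w : ℝ × EuclideanSpace ℝ (Fin n) => F (u w.1 w.2)) (Ioo 0 T ×ˢ Ω) := by
    refine hF.Fcont.comp hu.cont ?_
    rintro ⟨t, x⟩ ⟨h1, h2⟩
    exact hu.nonneg t h1 x h2
  have hχc : Continuous χ := hcut.smooth.continuous
  have hJc : ContinuousOn (fun w : ℝ × EuclideanSpace ℝ (Fin n) => χ w.2 ^ (m + 2) * F (u w.1 w.2)) (Ioo 0 T ×ˢ Ω) :=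
    ContinuousOn.mul (by fun_prop) hFu
  have hK : ∃ K, ∀ x ∈ S, χ x ^ (m + 2) * F (u t0 x) ≤ K := by
    have : ContinuousOn (fun x => χ x ^ (m + 2) * F (u t0 x)) S :=
      hJc.comp (f := fun x => (t0, x)) (by fun_prop) (fun x hx => ⟨ht0, hcut.sub hx⟩)
    obtain ⟨K, hK⟩ := hcut.cpt.bddAbove_image this
    exact ⟨K, fun x hx => hK ⟨x, hx, rfl⟩⟩
  obtain ⟨K, hK⟩ := hK
  set ε := δ / (B + |K| + 1) with hεdef
  have hden : 0 < B + |K| + 1 := by positivity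
  have hε : 0 < ε := by positivity
  have hεd : ε * (B + |K| + 1) = δ := by rw [hεdef]; field_simp
  have main : ∀ τ ∈ Ioo 0 κ, ∀ t ∈ Ico t0 (T - τ), ∀ x ∈ S,
      0 < (u (t + τ) x - u t x) / τ - ε * Real.exp (-(t - t0)) * (χ x ^ (m + 2) * F (u t x)) := by
    intro τ hτ t1 ht1
    have hfin := first_touch (z := fun t x => (u (t + τ) x - u t x) / τ -
      ε * Real.exp (-(t - t0)) * (χ x ^ (m + 2) * F (u t x))) (t0 := t0) (t1 := t1) hcut.cpt ?_ ?_ ?_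
    · exact hfin t1 ⟨ht1.1, le_rfl⟩
    · have hsub : Icc t0 t1 ×ˢ S ⊆ Ioo 0 T ×ˢ Ω := by
        rintro ⟨t, x⟩ ⟨h1, h2⟩
        exact ⟨⟨by linarith [h1.1, ht0.1], by linarith [h1.2, ht1.2, hτ.1]⟩, hcut.sub h2⟩
      refine ContinuousOn.sub (ContinuousOn.div_const (ContinuousOn.sub ?_ (hu.cont.mono hsub)) _)
        (ContinuousOn.mul ?_ (hJc.mono hsub))
      · refine hu.cont.comp (f := fun w : ℝ × EuclideanSpace ℝ (Fin n) => (w.1 + τ, w.2)) (by fun_prop) ?_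
        rintro ⟨t, x⟩ ⟨h1, h2⟩
        exact ⟨⟨by linarith [h1.1, ht0.1, hτ.1], by linarith [h1.2, ht1.2, hτ.1]⟩, hcut.sub h2⟩
      · fun_prop
    · intro x hx
      have h1 := hD τ hτ t0 ⟨le_rfl, by linarith [ht1.1, ht1.2]⟩ x hx
      have h2 := hK x hx
      simp only [sub_self, neg_zero, Real.exp_zero, mul_one]
      have h3 : ε * (χ x ^ (m + 2) * F (u t0 x)) ≤ ε * |K| := by
        gcongr; exact h2.trans (le_abs_self K)
      nlinarith
    · intro t ht x hx h0 hxz hsz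
      have hxΩ := hcut.sub hx
      have htT : t < T - τ := lt_of_le_of_lt ht.2 ht1.2
      have h1 := hD τ hτ t ⟨ht.1.le, htT⟩ x hx
      have hnn := hu.nonneg t ⟨ht0.1.trans ht.1, by linarith [hτ.1]⟩ x hxΩ
      have hexp : Real.exp (-(t - t0)) ≤ 1 := Real.exp_le_one_iff.2 (by linarith [ht.1])
      have hexp0 := Real.exp_pos (-(t - t0))
      set e := Real.exp (-(t - t0)) with he
      have h2 : δ ≤ ε * e * (χ x ^ (m + 2) * F (u t x)) := by
        have h0' : (u (t + τ) x - u t x) / τ - ε * e * (χ x ^ (m + 2) * F (u t x)) = 0 := h0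
        linarith
      have hpos : 0 < χ x ^ (m + 2) * F (u t x) := by
        by_contra h
        push Not at h
        nlinarith [mul_pos hε hexp0]
      have hχ : 0 < χ x := by
        refine lt_of_le_of_ne (hcut.rng x).1 fun h => ?_
        rw [← h] at hpos; simp at hpos
      have hBx : B ≤ χ x ^ (m + 2) * F (u t x) := by
        have : ε * B ≤ ε * (χ x ^ (m + 2) * F (u t x)) := by
          have h3 : ε * e * (χ x ^ (m + 2) * F (u t x)) ≤ ε * 1 * (χ x ^ (m + 2) * F (u t x)) := by gcongr
          nlinarith [abs_nonneg K]
        exact le_of_mul_le_mul_left this hε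
      obtain ⟨hs, hk⟩ := hkey (u t x) hnn (χ x) hχ (hcut.rng x).2 hBx
      exact hu.Jtouch hF hcut hτ.1 hε ht0.1 ht.1 htT hx hχ hs hk rfl h0 hxz hsz
  refine ⟨ε * Real.exp (-(T - t0)), by positivity, ?_⟩
  intro x hx t ht d hd
  have hxS : x ∈ S := mem_of_mem_nhds (hcut.nhd x (by rw [hx]; exact one_ne_zero))
  have hnn := hu.nonneg t ⟨lt_of_lt_of_le ht0.1 ht.1, ht.2⟩ x (hcut.sub hxS)
  have hfn := hf0 _ hnn
  have h1 := hd.tendsto_slope_zero_right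
  refine ge_of_tendsto h1 ?_
  have hT : 0 < T - t := by linarith [ht.2]
  filter_upwards [Ioo_mem_nhdsGT hκ, Ioo_mem_nhdsGT hT] with τ hτ hτ2
  have h2 := main τ hτ t ⟨ht.1, by linarith [hτ2.2]⟩ x hxS
  rw [hx, one_pow, one_mul] at h2
  have h3 : Real.exp (-(T - t0)) ≤ Real.exp (-(t - t0)) := Real.exp_le_exp.2 (by linarith)
  have h4 : ε * Real.exp (-(T - t0)) * f (u t x) ≤ ε * Real.exp (-(t - t0)) * F (u t x) := by
    gcongr
    exact hF.fF _ hnn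
  rw [smul_eq_mul, inv_mul_eq_div]
  linarith

end


lemma typeI_ode {p ε s0 t0 T : ℝ} (hp : 1 < p) (hε : 0 < ε) (hs0 : 0 < s0) (ht0 : 0 < t0) {f : ℝ → ℝ}
    (hf : ∀ s, s0 < s → s ^ p / 2 ≤ f s) {y y' : ℝ → ℝ}
    (hy : ∀ t ∈ Ico t0 T, HasDerivAt y (y' t) t) (hm : MonotoneOn y (Ico t0 T))
    (hin : ∀ t ∈ Ico t0 T, ε * f (y t) ≤ y' t) :
    ∀ t ∈ Ico t0 T, y t ≤ max (((p - 1) * ε / 2) ^ (-(1 / (p - 1)))) (s0 * T ^ (1 / (p - 1))) * (T - t) ^ (-(1 / (p - 1))) := by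
  intro t ht
  set α := 1 / (p - 1) with hα
  have hp1 : 0 < p - 1 := by linarith
  have hα0 : 0 < α := by positivity
  set κ := (p - 1) * ε / 2 with hκ
  have hκ0 : 0 < κ := by positivity
  have hTt : 0 < T - t := by linarith [ht.2]
  have hT : 0 < T := by linarith [ht.1]
  have hpw : 0 < (T - t) ^ (-α) := by positivity
  rcases le_or_gt (y t) s0 with h | h
  · have h1 : T ^ (-α) ≤ (T - t) ^ (-α) :=
      Real.rpow_le_rpow_of_nonpos hTt (by linarith [ht.1]) (by linarith)
    have h2 : T ^ α * T ^ (-α) = 1 := by rw [← Real.rpow_add hT]; simp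
    calc y t ≤ s0 := h
      _ = s0 * T ^ α * T ^ (-α) := by rw [mul_assoc, h2, mul_one]
      _ ≤ s0 * T ^ α * (T - t) ^ (-α) := by gcongr
      _ ≤ _ := by gcongr; exact le_max_right _ _
  · have hyp : 0 < y t := by linarith
    have hb : ∀ b ∈ Ico t T, κ * (b - t) ≤ y t ^ (1 - p) := by
      intro b hb
      have hsub : ∀ r ∈ Icc t b, r ∈ Ico t0 T := fun r hr => ⟨ht.1.trans hr.1, lt_of_le_of_lt hr.2 hb.2⟩
      have hbig : ∀ r ∈ Icc t b, s0 < y r := fun r hr =>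
        h.trans_le (hm ht (hsub r hr) hr.1)
      have hder : ∀ r ∈ Icc t b, HasDerivAt (fun r => y r ^ (1 - p) + κ * r)
          (y' r * (1 - p) * y r ^ (1 - p - 1) + κ) r := by
        intro r hr
        have h1 := (hy r (hsub r hr)).rpow_const (p := 1 - p) (Or.inl (by linarith [hbig r hr]))
        exact (h1.add ((hasDerivAt_id r).const_mul κ)).congr_deriv (by simp)
      have hanti : AntitoneOn (fun r => y r ^ (1 - p) + κ * r) (Icc t b) := by
        apply antitoneOn_of_deriv_nonpos (convex_Icc t b)
          (fun r hr => (hder r hr).continuousAt.continuousWithinAt)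
        · intro r hr
          rw [interior_Icc] at hr
          exact (hder r (Ioo_subset_Icc_self hr)).differentiableAt.differentiableWithinAt
        · intro r hr
          rw [interior_Icc] at hr
          have hr' := Ioo_subset_Icc_self hr
          rw [(hder r hr').deriv]
          have hyr : 0 < y r := by linarith [hbig r hr']
          have h1 : ε * (y r ^ p / 2) ≤ y' r :=
            le_trans (by have := hf _ (hbig r hr'); gcongr) (hin r (hsub r hr'))
          have h2 : y r ^ p * y r ^ (1 - p - 1) = 1 := by
            rw [← Real.rpow_add hyr]; simp
          have h3 : 0 < y r ^ (1 - p - 1) := by positivity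
          have h4 : ε / 2 ≤ y' r * y r ^ (1 - p - 1) := by
            calc ε / 2 = ε * (y r ^ p / 2) * y r ^ (1 - p - 1) := by
                  rw [show ε * (y r ^ p / 2) * y r ^ (1 - p - 1) = ε / 2 * (y r ^ p * y r ^ (1 - p - 1)) by ring, h2, mul_one]
              _ ≤ _ := by gcongr
          rw [hκ]
          nlinarith
      have h1 := hanti (left_mem_Icc.2 hb.1) (right_mem_Icc.2 hb.1) hb.1
      simp only at h1
      have h2 : 0 < y b ^ (1 - p) := by
        have := hbig b (right_mem_Icc.2 hb.1)
        exact Real.rpow_pos_of_pos (by linarith) _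
      nlinarith
    have hlim : κ * (T - t) ≤ y t ^ (1 - p) := by
      have hc : Tendsto (fun b => κ * (b - t)) (nhdsWithin T (Iio T)) (nhds (κ * (T - t))) := by
        have : Continuous (fun b => κ * (b - t)) := by fun_prop
        exact (this.tendsto T).mono_left nhdsWithin_le_nhds
      refine le_of_tendsto hc ?_
      filter_upwards [Ioo_mem_nhdsLT ht.2] with b hb' using hb b ⟨hb'.1.le, hb'.2⟩
    have h1 : (y t ^ (1 - p)) ^ (-α) ≤ (κ * (T - t)) ^ (-α) :=
      Real.rpow_le_rpow_of_nonpos (by positivity) hlim (by linarith)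
    have h2 : (y t ^ (1 - p)) ^ (-α) = y t := by
      rw [← Real.rpow_mul hyp.le, show (1 - p) * -α = 1 by rw [hα]; field_simp; ring, Real.rpow_one]
    rw [h2, Real.mul_rpow hκ0.le hTt.le] at h1
    refine h1.trans ?_
    gcongr
    exact le_max_left _ _


section
variable {n : ℕ}

set_option maxHeartbeats 1000000 in
lemma Sol.final_barrier {Ω : Set (EuclideanSpace ℝ (Fin n))} {T : ℝ}
    {V : EuclideanSpace ℝ (Fin n) → ℝ} {f : ℝ → ℝ} {u : ℝ → EuclideanSpace ℝ (Fin n) → ℝ}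
    (hu : Sol Ω T V f u) {p α C7 : ℝ} (hα0 : 0 < α) (hαp : α * p = α + 1) (hC7 : 0 < C7)
    (hf0 : ∀ s ≥ 0, 0 ≤ f s) (upf : ∀ s, 0 ≤ s → f s ≤ C7 * (1 + s ^ p))
    {x0 : EuclideanSpace ℝ (Fin n)} {r η A0 A β t0 : ℝ} (hr : 0 < r) (ht0 : t0 ∈ Ioo 0 T)
    (hsub : closedBall x0 r ⊆ Ω) (hη : 0 < η) (hVη : ∀ x ∈ closedBall x0 r, V x ≤ η)
    (hA0 : 0 < A0) (hI : ∀ t ∈ Ico t0 T, ∀ x ∈ closedBall x0 r, u t x ≤ A0 * (T - t) ^ (-α))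
    (hA : 2 ^ α * A0 < A)
    (hη2 : η * (C7 * ((2 * (T - t0)) ^ (α + 1) + A ^ p)) < 3 / 4 * (α * A))
    (hβ : 0 < β) (hβ1 : β * r ^ 2 * (4 * n + 16 * (α + 1)) ≤ 1 / 4) (hβ2 : β * (r ^ 2) ^ 2 ≤ T - t0) :
    ∀ t ∈ Ico t0 T, ∀ x ∈ closedBall x0 r,
      u t x ≤ A * (β * (r ^ 2 - ‖x - x0‖ ^ 2) ^ 2 + (T - t)) ^ (-α) := by
  have h2α : (1:ℝ) ≤ 2 ^ α := Real.one_le_rpow (by norm_num) hα0.le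
  have hAA : A0 < A := by nlinarith
  have hAp : 0 < A := hA0.trans hAA
  have hbsq : ∀ x ∈ closedBall x0 r, 0 ≤ r ^ 2 - ‖x - x0‖ ^ 2 ∧ r ^ 2 - ‖x - x0‖ ^ 2 ≤ r ^ 2 := by
    intro x hx
    rw [mem_closedBall_iff_norm] at hx
    constructor
    · nlinarith [norm_nonneg (x - x0)]
    · nlinarith [norm_nonneg (x - x0)]
  have hψpos : ∀ t < T, ∀ s : ℝ, 0 < β * (r ^ 2 - s) ^ 2 + (T - t) := by
    intro t ht s
    have : 0 < T - t := by linarith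
    positivity
  have hψle : ∀ t ≥ t0, ∀ x ∈ closedBall x0 r, β * (r ^ 2 - ‖x - x0‖ ^ 2) ^ 2 + (T - t) ≤ 2 * (T - t0) := by
    intro t ht x hx
    obtain ⟨h1, h2⟩ := hbsq x hx
    have : β * (r ^ 2 - ‖x - x0‖ ^ 2) ^ 2 ≤ β * (r ^ 2) ^ 2 := by gcongr
    linarith
  intro t1 ht1
  suffices h : ∀ t ∈ Icc t0 t1, ∀ x ∈ closedBall x0 r,
      0 < A * (β * (r ^ 2 - ‖x - x0‖ ^ 2) ^ 2 + (T - t)) ^ (-α) - u t x by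
    intro x hx
    linarith [h t1 ⟨ht1.1, le_rfl⟩ x hx]
  apply first_touch (z := fun t x => A * (β * (r ^ 2 - ‖x - x0‖ ^ 2) ^ 2 + (T - t)) ^ (-α) - u t x)
    (isCompact_closedBall x0 r)
  · apply ContinuousOn.sub
    · apply ContinuousOn.mul continuousOn_const
      apply ContinuousOn.rpow_const
      · fun_prop
      · rintro ⟨t, x⟩ ⟨h1, h2⟩
        exact Or.inl (hψpos t (lt_of_le_of_lt h1.2 ht1.2) _).ne'
    · apply hu.cont.mono
      rintro ⟨t, x⟩ ⟨h1, h2⟩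
      exact ⟨⟨lt_of_lt_of_le ht0.1 h1.1, lt_of_le_of_lt h1.2 ht1.2⟩, hsub h2⟩
  · intro x hx
    have h1 := hI t0 ⟨le_rfl, ht0.2⟩ x hx
    have hT : 0 < T - t0 := by linarith [ht0.2]
    have h2 : (2 * (T - t0)) ^ (-α) ≤ (β * (r ^ 2 - ‖x - x0‖ ^ 2) ^ 2 + (T - t0)) ^ (-α) :=
      Real.rpow_le_rpow_of_nonpos (hψpos t0 ht0.2 _) (hψle t0 le_rfl x hx) (by linarith)
    rw [Real.mul_rpow (by norm_num) hT.le, Real.rpow_neg (by norm_num)] at h2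
    have h3 : A0 < A * (2 ^ α)⁻¹ := by
      rw [← div_eq_mul_inv, lt_div_iff₀ (by positivity)]; linarith
    have h4 : 0 < (T - t0) ^ (-α) := by positivity
    have h5 : A0 * (T - t0) ^ (-α) < A * (2 ^ α)⁻¹ * (T - t0) ^ (-α) := by gcongr
    have h6 : A * ((2 ^ α)⁻¹ * (T - t0) ^ (-α)) ≤ A * (β * (r ^ 2 - ‖x - x0‖ ^ 2) ^ 2 + (T - t0)) ^ (-α) := by
      gcongr
    rw [← mul_assoc] at h6
    linarith
  · intro t ht x hx h0 hxz hsz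
    have htT : t < T := lt_of_le_of_lt ht.2 ht1.2
    have hTt : 0 < T - t := by linarith
    have hxΩ := hsub hx
    have mt : t ∈ Ioo 0 T := ⟨ht0.1.trans ht.1, htT⟩
    have hI1 := hI t ⟨ht.1.le, htT⟩ x hx
    have h0' : u t x = A * (β * (r ^ 2 - ‖x - x0‖ ^ 2) ^ 2 + (T - t)) ^ (-α) := by
      have h0'' : A * (β * (r ^ 2 - ‖x - x0‖ ^ 2) ^ 2 + (T - t)) ^ (-α) - u t x = 0 := h0
      linarith
    have hball : ‖x - x0‖ < r := by
      refine lt_of_le_of_ne (mem_closedBall_iff_norm.1 hx) fun h => ?_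
      rw [h, sub_self] at h0'
      simp only [ne_eq, OfNat.ofNat_ne_zero, not_false_eq_true, zero_pow, mul_zero, zero_add] at h0'
      have : 0 < (T - t) ^ (-α) := by positivity
      nlinarith
    have hnh : closedBall x0 r ∈ nhds x := by
      apply mem_of_superset (isOpen_ball.mem_nhds (mem_ball_iff_norm.2 hball)) ball_subset_closedBall
    obtain ⟨d, a, b, hpd, hd⟩ := hu.pd t mt x hxΩ
    set ρ := ‖x - x0‖ ^ 2 with hρ
    set ψ := β * (r ^ 2 - ρ) ^ 2 + (T - t) with hψ
    have hψ0 : 0 < ψ := hψpos t htT _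
    set P := ψ ^ (-α - 1) with hP
    have hP0 : 0 < P := by positivity
    set G1 : ℝ → ℝ := fun s => A * (-α) * ((β * (r ^ 2 - s) ^ 2 + (T - t)) ^ (-α - 1)) * (-2 * β * (r ^ 2 - s)) with hG1
    have hin : ∀ s, HasDerivAt (fun s => β * (r ^ 2 - s) ^ 2 + (T - t)) (-2 * β * (r ^ 2 - s)) s := by
      intro s
      have := ((((hasDerivAt_id s).const_sub (r ^ 2)).pow 2).const_mul β).add_const (T - t)
      exact this.congr_deriv (by simp; ring)
    have hG : ∀ s, HasDerivAt (fun s => A * (β * (r ^ 2 - s) ^ 2 + (T - t)) ^ (-α)) (G1 s) s := by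
      intro s
      have := ((hin s).rpow_const (p := -α) (Or.inl (hψpos t htT s).ne')).const_mul A
      exact this.congr_deriv (by simp only [hG1]; ring)
    set G2 : ℝ := A * (-α) * (P * (2 * β) + (-α - 1) * ψ ^ (-α - 1 - 1) * (-2 * β * (r ^ 2 - ρ)) ^ 2) with hG2
    have hG1' : HasDerivAt G1 G2 ρ := by
      have e1 := (hin ρ).rpow_const (p := -α - 1) (Or.inl hψ0.ne')
      have e2 : HasDerivAt (fun s : ℝ => -2 * β * (r ^ 2 - s)) (2 * β) ρ := by
        have := ((hasDerivAt_id ρ).const_sub (r ^ 2)).const_mul (-2 * β)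
        exact this.congr_deriv (by ring)
      have e3 := (e1.const_mul (A * (-α))).mul e2
      exact e3.congr_deriv (by simp only [hG2, hP, hψ]; ring)
    have hpdz : PD (fun t x => A * (β * (r ^ 2 - ‖x - x0‖ ^ 2) ^ 2 + (T - t)) ^ (-α) - u t x) t x
        (α * A * P - d) (fun i => G1 ρ * (2 * (x - x0) i) - a i)
        (fun i => (G2 * (2 * (x - x0) i) ^ 2 + G1 ρ * 2) - b i) := by
      constructor
      · have e1 : HasDerivAt (fun s => β * (r ^ 2 - ρ) ^ 2 + (T - s)) (-1) t := by
          have := ((hasDerivAt_id t).const_sub T).const_add (β * (r ^ 2 - ρ) ^ 2)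
          exact this
        have e2 := ((e1.rpow_const (p := -α) (Or.inl hψ0.ne')).const_mul A).sub hpd.1
        exact e2.congr_deriv (by simp only [hP, hψ]; ring)
      · intro i
        exact (D2_radial x x0 i hG hG1').sub (hpd.2 i)
    obtain ⟨h1, h2⟩ := hpdz.touch ht.1 hnh h0 hxz hsz
    rw [Finset.sum_sub_distrib, sum_radial] at h2
    obtain ⟨hb1, hb2⟩ := hbsq x hx
    have hρ0 : 0 ≤ ρ := by positivity
    have hρr : ρ ≤ r ^ 2 := by linarith
    have hG1le : G1 ρ ≤ 2 * (A * α * β * r ^ 2 * P) := by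
      have : G1 ρ = 2 * (A * α * β * (r ^ 2 - ρ) * P) := by simp only [hG1, hP, hψ]; ring
      rw [this]; gcongr
    have hG2le : G2 ≤ 4 * (A * α * (α + 1) * β * P) := by
      have e1 : ψ ^ (-α - 1 - 1) * ψ = P := by
        rw [hP, ← Real.rpow_add_one hψ0.ne']; congr 1; ring
      have e2 : β * (r ^ 2 - ρ) ^ 2 ≤ ψ := by linarith
      have e3 : 0 < ψ ^ (-α - 1 - 1) := by positivity
      have e4 : ψ ^ (-α - 1 - 1) * (β * (r ^ 2 - ρ) ^ 2) ≤ P := by rw [← e1]; gcongr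
      have e5 : G2 = -(2 * (A * α * β * P)) + 4 * (A * α * (α + 1) * β) * (ψ ^ (-α - 1 - 1) * (β * (r ^ 2 - ρ) ^ 2)) := by
        rw [hG2]; ring
      rw [e5]
      have e6 : 0 < 2 * (A * α * β * P) := by positivity
      have e7 : 4 * (A * α * (α + 1) * β) * (ψ ^ (-α - 1 - 1) * (β * (r ^ 2 - ρ) ^ 2)) ≤ 4 * (A * α * (α + 1) * β) * P := by
        gcongr
      linarith
    have hlap : 4 * G2 * ρ + 2 * n * G1 ρ ≤ A * α * P * (1 / 4) := by
      have e1 : 4 * G2 * ρ ≤ 4 * (4 * (A * α * (α + 1) * β * P)) * r ^ 2 := by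
        calc 4 * G2 * ρ ≤ 4 * (4 * (A * α * (α + 1) * β * P)) * ρ := by gcongr
          _ ≤ _ := by gcongr
      have e2 : 2 * n * G1 ρ ≤ 2 * n * (2 * (A * α * β * r ^ 2 * P)) := by gcongr
      have e3 : A * α * P * (β * r ^ 2 * (4 * n + 16 * (α + 1))) ≤ A * α * P * (1 / 4) := by gcongr
      linarith
    have hw : u t x ^ p = A ^ p * P := by
      rw [h0', Real.mul_rpow hAp.le (by positivity), ← Real.rpow_mul hψ0.le, hP]
      congr 2; linarith
    have hone : 1 ≤ (2 * (T - t0)) ^ (α + 1) * P := by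
      have e1 := hψle t ht.1.le x hx
      have e2 : ψ ^ (α + 1) ≤ (2 * (T - t0)) ^ (α + 1) := Real.rpow_le_rpow hψ0.le e1 (by linarith)
      have e3 : ψ ^ (α + 1) * P = 1 := by
        rw [hP, ← Real.rpow_add hψ0]; simp
      calc (1:ℝ) = ψ ^ (α + 1) * P := e3.symm
        _ ≤ _ := by gcongr
    have hnn := hu.nonneg t mt x hxΩ
    have hVf : V x * f (u t x) ≤ η * (C7 * ((2 * (T - t0)) ^ (α + 1) + A ^ p)) * P := by
      calc V x * f (u t x) ≤ η * f (u t x) := by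
            have := hf0 _ hnn
            gcongr
            exact hVη x hx
        _ ≤ η * (C7 * (1 + A ^ p * P)) := by rw [← hw]; gcongr; exact upf _ hnn
        _ ≤ η * (C7 * ((2 * (T - t0)) ^ (α + 1) * P + A ^ p * P)) := by gcongr
        _ = _ := by ring
    have hlt := mul_lt_mul_of_pos_right hη2 hP0
    rw [← hρ] at h2
    linarith

end


theorem stmt0
    (n : ℕ) (hn : 1 ≤ n)
    (Ω : Set (EuclideanSpace ℝ (Fin n)))
    (hΩ_open : IsOpen Ω) (hΩ_conn : IsConnected Ω) (hΩ_bdd : Bornology.IsBounded Ω)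
    (p : ℝ) (hp : 1 < p)
    (hpS : 3 ≤ n → p < ((n : ℝ) + 2) / ((n : ℝ) - 2))
    (f : ℝ → ℝ)
    (hf_nonneg : ∀ s ≥ (0:ℝ), 0 ≤ f s)
    (hf_C1 : ContDiffOn ℝ 1 f (Ici 0))
    (hf_C2 : ContDiffOn ℝ 2 f (Ici 0))
    (hf_conv : ConvexOn ℝ (Ici 0) f)
    (hf_lim : Tendsto (fun s : ℝ => s ^ (-p) * f s) atTop (nhds 1))
    (hf_deriv : ∃ C₀ > 0, ∀ s ≥ (0:ℝ), |deriv f s| ≤ C₀ * (1 + s ^ (p - 1)))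
    (V : EuclideanSpace ℝ (Fin n) → ℝ)
    (hV_nonneg : ∀ x ∈ closure Ω, 0 ≤ V x)
    (hV_holder : ∃ C β : ℝ, 0 < β ∧ β ≤ 1 ∧ 0 ≤ C ∧
      ∀ x ∈ closure Ω, ∀ y ∈ closure Ω, |V x - V y| ≤ C * ‖x - y‖ ^ β)
    (T : ℝ) (hT : 0 < T)
    (u : ℝ → EuclideanSpace ℝ (Fin n) → ℝ)
    (hu_nonneg : ∀ t ∈ Ioo 0 T, ∀ x ∈ Ω, 0 ≤ u t x)
    (hu_t : ∀ t ∈ Ioo 0 T, ∀ x ∈ Ω, DifferentiableAt ℝ (fun s => u s x) t)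
    (hu_x : ∀ t ∈ Ioo 0 T, ∀ x ∈ Ω, ContDiffAt ℝ 2 (fun y => u t y) x)
    (heq : ∀ t ∈ Ioo 0 T, ∀ x ∈ Ω,
      deriv (fun s => u s x) t = lap (fun y => u t y) x + V x * f (u t x))
    (hmono : ∀ t ∈ Ioo 0 T, ∀ x ∈ Ω, 0 ≤ deriv (fun s => u s x) t)
    (x₀ : EuclideanSpace ℝ (Fin n)) (hx₀ : x₀ ∈ Ω) (hVx₀ : V x₀ = 0)
    (hcomp : connectedComponentIn {x ∈ closure Ω | V x = 0} x₀ ∩ frontier Ω = ∅)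
    :
    ∃ r > 0, ∃ M > 0, ∀ t ∈ Ioo (T / 2) T, ∀ x ∈ Ω, ‖x - x₀‖ < r → u t x ≤ M := by
  obtain ⟨C₀, hC₀, hder⟩ := hf_deriv
  obtain ⟨CV, γ, hγ0, hγ1, hCV, hVh⟩ := hV_holder
  have hVc : ContinuousOn V (closure Ω) := by
    intro x hx
    rw [ContinuousWithinAt, tendsto_iff_dist_tendsto_zero]
    have hlim : Tendsto (fun y => CV * ‖y - x‖ ^ γ) (nhdsWithin x (closure Ω)) (nhds 0) := by
      have h1 : Continuous (fun y : EuclideanSpace ℝ (Fin n) => CV * ‖y - x‖ ^ γ) := by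
        refine continuous_const.mul (Continuous.rpow_const (by fun_prop) fun _ => Or.inr hγ0.le)
      have h2 := h1.tendsto x
      simp only [sub_self, norm_zero, Real.zero_rpow hγ0.ne', mul_zero] at h2
      exact h2.mono_left nhdsWithin_le_nhds
    refine tendsto_of_tendsto_of_tendsto_of_le_of_le' tendsto_const_nhds hlim
      (Eventually.of_forall fun y => dist_nonneg) ?_
    filter_upwards [self_mem_nhdsWithin] with y hy
    rw [Real.dist_eq]
    exact hVh y hy x hx
  have hcl : IsCompact (closure Ω) := hΩ_bdd.isCompact_closure
  obtain ⟨B, hB⟩ := hcl.bddAbove_image hVc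
  have hB' : ∀ x ∈ Ω, V x ≤ B := fun x hx => hB ⟨x, subset_closure hx, rfl⟩
  have hfc : ContinuousOn f (Ici 0) := hf_C1.continuousOn
  have hfd : ∀ s > 0, DifferentiableAt ℝ f s := fun s hs =>
    (hf_C1.contDiffAt (Ici_mem_nhds hs)).differentiableAt (by norm_num)
  have hLip := f_lowlip hp hfc hfd hf_conv hC₀ hder
  obtain ⟨q, F, f1, F1, F2, s0, c1, c2, C3, C7, hF⟩ := f_data hp hf_nonneg hf_C2 hf_conv hf_lim hC₀ hder
  have hmon : ∀ x ∈ Ω, MonotoneOn (fun t => u t x) (Ioo 0 T) := by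
    intro x hx
    apply monotoneOn_of_deriv_nonneg (convex_Ioo 0 T)
      (fun t ht => (hu_t t ht x hx).continuousAt.continuousWithinAt)
    · intro t ht
      rw [interior_Ioo] at ht
      exact (hu_t t ht x hx).differentiableWithinAt
    · intro t ht
      rw [interior_Ioo] at ht
      exact hmono t ht x hx
  have hu : Sol Ω T V f u := by
    refine ⟨hΩ_open, hu_nonneg, fun x hx => hV_nonneg x (subset_closure hx),
      joint_cont hΩ_open hmon (fun t ht x hx => (hu_t t ht x hx).continuousAt)
        (fun t ht x hx => (hu_x t ht x hx).continuousAt), hmon, ?_, ?_⟩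
    · intro t ht x hx
      refine ⟨_, _, _, ⟨(hu_t t ht x hx).hasDerivAt, fun i => D2.of_contDiffAt (hu_x t ht x hx) _⟩, ?_⟩
      rw [heq t ht x hx, lap]
    · intro t ht
      have h1 : ContinuousOn (fun x => lap (fun y => u t y) x + V x * f (u t x)) Ω := by
        refine ContinuousOn.add ?_ (ContinuousOn.mul (hVc.mono subset_closure) ?_)
        · unfold lap
          refine continuousOn_finsetSum _ fun i _ => ?_
          intro x hx
          exact (continuousAt_dd (hu_x t ht x hx) _).2.continuousWithinAt
        · refine hfc.comp (fun x hx => (hu_x t ht x hx).continuousAt.continuousWithinAt) ?_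
          intro x hx
          exact hu_nonneg t ht x hx
      exact h1.congr fun x hx => heq t ht x hx
  have hT2 : T / 2 ∈ Ioo 0 T := ⟨by linarith, by linarith⟩
  by_cases hpos : ∃ t1 ∈ Ioo 0 T, ∃ x1 ∈ Ω, 0 < deriv (fun s => u s x1) t1
  · obtain ⟨t1, ht1, x1, hx1, hd1⟩ := hpos
    set t0 := (t1 + T) / 2 with ht0def
    have ht0 : t0 ∈ Ioo 0 T := ⟨by linarith [ht1.1, ht1.2], by linarith [ht1.2]⟩
    have ht10 : t1 < t0 := by linarith [ht1.2]
    obtain ⟨S, χ, c, Ca, hcut⟩ := exists_cut hΩ_open hΩ_bdd hVc hV_nonneg hx₀ hVx₀ hcomp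
    obtain ⟨δ, hδ, κ, hκ, hD⟩ := hu.positivity hΩ_conn.isPreconnected (by positivity) hLip hB' ht1 hx1 hd1
      ht10 hcut.cpt hcut.sub
    obtain ⟨ε, hε, hJ⟩ := hu.Jbound hF hf_nonneg hcut ht0 hδ hκ hD
    set α := 1 / (p - 1) with hα
    have hp1 : 0 < p - 1 := by linarith
    have hα0 : 0 < α := by positivity
    have hs0 : 0 < s0 := by linarith [hF.hs0]
    set A0 := max (((p - 1) * ε / 2) ^ (-α)) (s0 * T ^ α) with hA0def
    have hA0 : 0 < A0 := lt_max_of_lt_right (by positivity)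
    have hI : ∀ x ∈ Ω, χ x = 1 → ∀ t ∈ Ico t0 T, u t x ≤ A0 * (T - t) ^ (-α) := by
      intro x hx hχ
      have hsub : ∀ t ∈ Ico t0 T, t ∈ Ioo 0 T := fun t ht => ⟨lt_of_lt_of_le ht0.1 ht.1, ht.2⟩
      exact typeI_ode hp hε hs0 ht0.1 hF.low (y := fun t => u t x) (y' := fun t => deriv (fun s => u s x) t)
        (fun t ht => (hu_t t (hsub t ht) x hx).hasDerivAt) ((hmon x hx).mono hsub)
        (fun t ht => hJ x hχ t ht _ (hu_t t (hsub t ht) x hx).hasDerivAt)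
    set A := 2 ^ α * A0 + 1 with hA
    have hAp : 0 < A := by positivity
    have hTt : 0 < T - t0 := by linarith [ht0.2]
    have hC7 := hF.hC7
    set W := C7 * ((2 * (T - t0)) ^ (α + 1) + A ^ p) with hW
    have hWp : 0 < W := by positivity
    set η := (α * A / 2) / W with hη
    have hηp : 0 < η := by positivity
    have hη2 : η * W < 3 / 4 * (α * A) := by
      have : η * W = α * A / 2 := by rw [hη]; field_simp
      have : 0 < α * A := by positivity
      linarith
    have hVcx : ContinuousAt V x₀ := (hVc.mono subset_closure).continuousAt (hΩ_open.mem_nhds hx₀)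
    have hVe : ∀ᶠ x in nhds x₀, V x < η := hVcx.eventually_lt_const (by rw [hVx₀]; exact hηp)
    have hΩe : ∀ᶠ x in nhds x₀, x ∈ Ω := hΩ_open.mem_nhds hx₀
    obtain ⟨r, hr, hball⟩ := Metric.nhds_basis_closedBall.mem_iff.1 (hVe.and (hΩe.and hcut.one))
    set β := min (1 / 4 / (r ^ 2 * (4 * n + 16 * (α + 1)))) ((T - t0) / (r ^ 2) ^ 2) with hβ
    have hβp : 0 < β := lt_min (by positivity) (by positivity)
    have hb := hu.final_barrier (p := p) hα0 (by rw [hα]; field_simp; ring) hC7 hf_nonneg hF.upf hr ht0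
      (fun x hx => (hball hx).2.1) hηp (fun x hx => (hball hx).1.le) hA0
      (fun t ht x hx => hI x (hball hx).2.1 (hball hx).2.2 t ht) (A := A) (by linarith) hη2 hβp
      (by
        have h1 : β ≤ 1 / 4 / (r ^ 2 * (4 * n + 16 * (α + 1))) := min_le_left _ _
        rw [le_div_iff₀ (by positivity)] at h1
        linarith)
      (by
        have h1 : β ≤ (T - t0) / (r ^ 2) ^ 2 := min_le_right _ _
        rwa [le_div_iff₀ (by positivity)] at h1)
    set M := A * (β * (3 / 4 * r ^ 2) ^ 2) ^ (-α) with hM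
    have hbd : ∀ t ∈ Ico t0 T, ∀ x, ‖x - x₀‖ < r / 2 → u t x ≤ M := by
      intro t ht x hx
      have hxb : x ∈ closedBall x₀ r := by rw [mem_closedBall_iff_norm]; linarith
      refine (hb t ht x hxb).trans ?_
      rw [hM]
      refine mul_le_mul_of_nonneg_left ?_ hAp.le
      refine Real.rpow_le_rpow_of_nonpos (by positivity) ?_ (by linarith)
      have h1 : 3 / 4 * r ^ 2 ≤ r ^ 2 - ‖x - x₀‖ ^ 2 := by nlinarith [norm_nonneg (x - x₀)]
      have h2 : β * (3 / 4 * r ^ 2) ^ 2 ≤ β * (r ^ 2 - ‖x - x₀‖ ^ 2) ^ 2 := by gcongr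
      linarith [ht.2]
    refine ⟨r / 2, by positivity, M, by positivity, ?_⟩
    intro t ht x hx hxr
    rcases le_or_gt t0 t with h | h
    · exact hbd t ⟨h, ht.2⟩ x hxr
    · exact (hmon x hx ⟨by linarith [ht.1], ht.2⟩ ht0 h.le).trans (hbd t0 ⟨le_rfl, ht0.2⟩ x hxr)
  · push Not at hpos
    have hanti : ∀ x ∈ Ω, AntitoneOn (fun t => u t x) (Ioo 0 T) := by
      intro x hx
      apply antitoneOn_of_deriv_nonpos (convex_Ioo 0 T)
        (fun t ht => (hu_t t ht x hx).continuousAt.continuousWithinAt)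
      · intro t ht
        rw [interior_Ioo] at ht
        exact (hu_t t ht x hx).differentiableWithinAt
      · intro t ht
        rw [interior_Ioo] at ht
        exact hpos t ht x hx
    have hc : ContinuousAt (fun y => u (T / 2) y) x₀ := (hu_x _ hT2 x₀ hx₀).continuousAt
    have he : ∀ᶠ y in nhds x₀, u (T / 2) y < u (T / 2) x₀ + 1 := hc.eventually_lt_const (by linarith)
    obtain ⟨r, hr, hball⟩ := Metric.eventually_nhds_iff.1 he
    refine ⟨r, hr, u (T / 2) x₀ + 1, by linarith [hu_nonneg _ hT2 x₀ hx₀], ?_⟩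
    intro t ht x hx hxr
    have h1 := hanti x hx hT2 ⟨by linarith [ht.1], ht.2⟩ ht.1.le
    have h2 := hball (y := x) (by rwa [dist_eq_norm])
    exact le_trans h1 h2.le
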